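/- arXiv:2108.02367 — 3 statements merged into one kernel-verified Lean document; each statement's English description precedes it below -/
import Mathlib

section
/- Define γ₁ : [0,4] → ℝ² by γ₁(τ) = (1 − τ, 1) for τ ∈ [0,2] and γ₁(τ) = (−1, 3 − τ) for τ ∈ [2,4], and let γ₂(τ) be obtained from γ₁(τ) by swapping its two coordinates. Then γ₁ and γ₂ are unit-speed curves on C_∞ with respect to the ℓ_∞ norm, ‖γ₁(τ) − γ₂(τ)‖_∞ = τ for τ ∈ [0,2] and ‖γ₁(τ) − γ₂(τ)‖_∞ = 4 − τ for τ ∈ [2,4], and consequently max over τ ∈ [0,4] of (1 + τ + ‖γ₁(τ) − γ₂(τ)‖_∞) equals 5, the maximum being attained for every τ ∈ [2,4]. (This is the worst-case cost of the wireless evacuation algorithm Wireless-Search_∞(π/4) on the ℓ_∞ unit disk.) -/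
open Real MeasureTheory intervalIntegral

/-- The ℓ_∞ norm of a point of ℝ². -/
noncomputable def linfN (z : ℝ × ℝ) : ℝ := max |z.1| |z.2|

/-- The ℓ_∞ unit circle. -/
def Cinf : Set (ℝ × ℝ) := {z | linfN z = 1}

/-- Trajectory of robot #1 in Wireless-Search_∞(π/4). -/
noncomputable def gamma1 : ℝ → ℝ × ℝ := fun τ =>
  if τ ≤ 2 then (1 - τ, 1) else (-1, 3 - τ)

/-- Trajectory of robot #2: obtained from `gamma1` by swapping the two coordinates. -/
noncomputable def gamma2 : ℝ → ℝ × ℝ := fun τ => ((gamma1 τ).2, (gamma1 τ).1)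

theorem gamma1_le {τ : ℝ} (h : τ ≤ 2) : gamma1 τ = (1 - τ, 1) := by
  simp [gamma1, h]

theorem gamma1_ge {τ : ℝ} (h : 2 ≤ τ) : gamma1 τ = (-1, 3 - τ) := by
  rcases h.eq_or_lt with rfl | h
  · simp only [gamma1, le_refl, if_true]
    norm_num
  · simp [gamma1, not_le.mpr h]

theorem dist_le {τ : ℝ} (h0 : 0 ≤ τ) (h : τ ≤ 2) : linfN (gamma1 τ - gamma2 τ) = τ := by
  have e1 : (1 - τ - 1 : ℝ) = -τ := by ring
  have e2 : (1 - (1 - τ) : ℝ) = τ := by ring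
  simp only [linfN, gamma2, gamma1_le h, Prod.mk_sub_mk, e1, e2, abs_neg, max_self]
  exact abs_of_nonneg h0

theorem dist_ge {τ : ℝ} (h0 : 2 ≤ τ) (h : τ ≤ 4) : linfN (gamma1 τ - gamma2 τ) = 4 - τ := by
  have e1 : (-1 - (3 - τ) : ℝ) = -(4 - τ) := by ring
  have e2 : (3 - τ - -1 : ℝ) = 4 - τ := by ring
  simp only [linfN, gamma2, gamma1_ge h0, Prod.mk_sub_mk, e1, e2, abs_neg, max_self]
  exact abs_of_nonneg (by linarith)

theorem deriv_lt {τ : ℝ} (h : τ < 2) :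
    HasDerivAt gamma1 (-1, 0) τ ∧ HasDerivAt gamma2 (0, -1) τ := by
  have a : HasDerivAt (fun t : ℝ => 1 - t) (-1) τ := (hasDerivAt_id τ).const_sub 1
  have b : HasDerivAt (fun _ : ℝ => (1 : ℝ)) 0 τ := hasDerivAt_const τ 1
  constructor
  · refine (a.prodMk b).congr_of_eventuallyEq ?_
    filter_upwards [Iio_mem_nhds h] with t ht
    exact gamma1_le (le_of_lt ht)
  · refine (b.prodMk a).congr_of_eventuallyEq ?_
    filter_upwards [Iio_mem_nhds h] with t ht
    simp only [gamma2, gamma1_le (le_of_lt ht)]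

theorem deriv_gt {τ : ℝ} (h : 2 < τ) :
    HasDerivAt gamma1 (0, -1) τ ∧ HasDerivAt gamma2 (-1, 0) τ := by
  have a : HasDerivAt (fun t : ℝ => 3 - t) (-1) τ := (hasDerivAt_id τ).const_sub 3
  have b : HasDerivAt (fun _ : ℝ => (-1 : ℝ)) 0 τ := hasDerivAt_const τ (-1)
  constructor
  · refine (b.prodMk a).congr_of_eventuallyEq ?_
    filter_upwards [Ioi_mem_nhds h] with t ht
    exact gamma1_ge (le_of_lt ht)
  · refine (a.prodMk b).congr_of_eventuallyEq ?_
    filter_upwards [Ioi_mem_nhds h] with t ht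
    simp only [gamma2, gamma1_ge (le_of_lt ht)]

/-- `γ₁` and `γ₂` are unit-speed curves on `C_∞` (w.r.t. ℓ_∞), their ℓ_∞ distance is `τ`
on `[0,2]` and `4 − τ` on `[2,4]`, and the worst-case evacuation cost
`max_{τ ∈ [0,4]} (1 + τ + ‖γ₁(τ) − γ₂(τ)‖_∞)` equals `5`, attained for every `τ ∈ [2,4]`. -/
theorem stmt_4 :
    (∀ τ ∈ Set.Icc (0 : ℝ) 4, gamma1 τ ∈ Cinf ∧ gamma2 τ ∈ Cinf) ∧
    (∀ τ ∈ Set.Ioo (0 : ℝ) 2 ∪ Set.Ioo (2 : ℝ) 4,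
      linfN (deriv gamma1 τ) = 1 ∧ linfN (deriv gamma2 τ) = 1) ∧
    (∀ τ ∈ Set.Icc (0 : ℝ) 2, linfN (gamma1 τ - gamma2 τ) = τ) ∧
    (∀ τ ∈ Set.Icc (2 : ℝ) 4, linfN (gamma1 τ - gamma2 τ) = 4 - τ) ∧
    IsGreatest ((fun τ => 1 + τ + linfN (gamma1 τ - gamma2 τ)) '' Set.Icc (0 : ℝ) 4) 5 ∧
    (∀ τ ∈ Set.Icc (2 : ℝ) 4, 1 + τ + linfN (gamma1 τ - gamma2 τ) = 5) := by
  refine ⟨?_, ?_, fun τ h => dist_le h.1 h.2, fun τ h => dist_ge h.1 h.2, ⟨?_, ?_⟩, ?_⟩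
  · rintro τ ⟨h0, h4⟩
    rcases le_total τ 2 with h | h
    · have hb : |1 - τ| ≤ 1 := abs_le.mpr ⟨by linarith, by linarith⟩
      simp [Cinf, linfN, gamma2, gamma1_le h, hb]
    · have hb : |3 - τ| ≤ 1 := abs_le.mpr ⟨by linarith, by linarith⟩
      simp [Cinf, linfN, gamma2, gamma1_ge h, hb]
  · rintro τ (h | h)
    · rw [(deriv_lt h.2).1.deriv, (deriv_lt h.2).2.deriv]
      simp [linfN]
    · rw [(deriv_gt h.1).1.deriv, (deriv_gt h.1).2.deriv]
      simp [linfN]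
  · refine ⟨2, ⟨by norm_num, by norm_num⟩, ?_⟩
    simp only [dist_le (τ := 2) (by norm_num) le_rfl]
    norm_num
  · rintro _ ⟨τ, ⟨h0, h4⟩, rfl⟩
    rcases le_total τ 2 with h | h
    · simp only [dist_le h0 h]
      linarith
    · simp only [dist_ge h h4]
      linarith
  · rintro τ ⟨h2, h4⟩
    rw [dist_ge h2 h4]
    ring
end

section
/- For every real p > 1, the function L_p is increasing on [0, π_p]: whenever 0 ≤ u ≤ u′ ≤ π_p, one has L_p(u) ≤ L_p(u′). -/
open Real MeasureTheory intervalIntegral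

/-- The ℓ_p norm of a point of ℝ². -/
noncomputable def lpN (p : ℝ) (z : ℝ × ℝ) : ℝ := (|z.1| ^ p + |z.2| ^ p) ^ (1 / p)

/-- The ℓ_p unit circle. -/
def Cp (p : ℝ) : Set (ℝ × ℝ) := {z | lpN p z = 1}

/-- The normalization factor `N_p(φ) = (|sin φ|^p + |cos φ|^p)^{1/p}`. -/
noncomputable def Np (p φ : ℝ) : ℝ := (|Real.sin φ| ^ p + |Real.cos φ| ^ p) ^ (1 / p)

/-- The parameterization `ρ_p(φ) = (cos φ, sin φ)/N_p(φ)` of the ℓ_p unit circle. -/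
noncomputable def rho (p φ : ℝ) : ℝ × ℝ := (Real.cos φ / Np p φ, Real.sin φ / Np p φ)

/-- The ℓ_p speed `‖ρ_p′(t)‖_p` of the parameterization `ρ_p`. -/
noncomputable def speed (p t : ℝ) : ℝ := lpN p (deriv (rho p) t)

/-- The ℓ_p arc-length measure of a subset `U` of the ℓ_p unit circle. -/
noncomputable def muP (p : ℝ) (U : Set (ℝ × ℝ)) : ℝ :=
  ∫ t in {t : ℝ | t ∈ Set.Ico 0 (2 * Real.pi) ∧ rho p t ∈ U}, speed p t

/-- `π_p`, half the ℓ_p-circumference of the ℓ_p unit circle. -/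
noncomputable def piP (p : ℝ) : ℝ := muP p (Cp p) / 2

/-- `L_p(u)`: the length of the shortest chord of `C_p` whose endpoints cut off a
counterclockwise arc of ℓ_p length `u`. -/
noncomputable def chordMin (p u : ℝ) : ℝ :=
  sInf {d : ℝ | ∃ a b : ℝ, a ≤ b ∧ b ≤ a + 2 * Real.pi ∧
    (∫ t in a..b, speed p t) = u ∧ d = lpN p (rho p a - rho p b)}

lemma lpN_smul (p : ℝ) (hp : 1 < p) (c : ℝ) (z : ℝ × ℝ) : lpN p (c • z) = |c| * lpN p z := by
  unfold lpN
  have h0 : p ≠ 0 := by linarith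
  simp only [Prod.smul_fst, Prod.smul_snd, smul_eq_mul, abs_mul]
  rw [Real.mul_rpow (abs_nonneg _) (abs_nonneg _), Real.mul_rpow (abs_nonneg _) (abs_nonneg _),
    ← mul_add, Real.mul_rpow (by positivity) (by positivity), ← Real.rpow_mul (abs_nonneg _),
    mul_one_div_cancel h0, Real.rpow_one]

lemma lpN_add (p : ℝ) (hp : 1 < p) (x y : ℝ × ℝ) : lpN p (x + y) ≤ lpN p x + lpN p y := by
  have := Real.Lp_add_le (Finset.univ : Finset (Fin 2)) ![x.1, x.2] ![y.1, y.2] hp.le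
  simpa [lpN, Fin.sum_univ_two] using this

lemma lpN_neg (p : ℝ) (z : ℝ × ℝ) : lpN p (-z) = lpN p z := by simp [lpN]

lemma lpN_nonneg (p : ℝ) (z : ℝ × ℝ) : 0 ≤ lpN p z := by unfold lpN; positivity

lemma base_pos (p t : ℝ) : 0 < |Real.sin t| ^ p + |Real.cos t| ^ p := by
  by_cases h : Real.sin t = 0
  · have h2 : Real.cos t ≠ 0 := by
      intro h2
      have := Real.sin_sq_add_cos_sq t
      simp [h, h2] at this
    have : 0 < |Real.cos t| := abs_pos.mpr h2
    positivity
  · have : 0 < |Real.sin t| := abs_pos.mpr h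
    positivity

lemma Np_pos (p t : ℝ) : 0 < Np p t := Real.rpow_pos_of_pos (base_pos p t) _

lemma lpN_rho (p : ℝ) (hp : 1 < p) (t : ℝ) : lpN p (rho p t) = 1 := by
  have h : rho p t = (Np p t)⁻¹ • (Real.cos t, Real.sin t) := by
    ext <;> simp [rho, div_eq_inv_mul]
  have hN := Np_pos p t
  have h2 : lpN p (Real.cos t, Real.sin t) = Np p t := by simp [lpN, Np, add_comm]
  rw [h, lpN_smul p hp, h2, abs_of_pos (inv_pos.mpr hN), inv_mul_cancel₀ hN.ne']

lemma contDiff_Np (p : ℝ) (hp : 1 < p) : ContDiff ℝ 1 (Np p) := by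
  have h : ContDiff ℝ 1 (fun x : ℝ => ‖x‖ ^ p) := contDiff_norm_rpow hp
  have hs := h.comp Real.contDiff_sin
  have hc := h.comp Real.contDiff_cos
  exact (hs.add hc).rpow_const_of_ne (fun t => (base_pos p t).ne')

lemma contDiff_rho (p : ℝ) (hp : 1 < p) : ContDiff ℝ 1 (rho p) := by
  have hN := contDiff_Np p hp
  exact (Real.contDiff_cos.div hN fun t => (Np_pos p t).ne').prodMk
    (Real.contDiff_sin.div hN fun t => (Np_pos p t).ne')

lemma lpN_pos (p : ℝ) (z : ℝ × ℝ) (hz : z ≠ 0) : 0 < lpN p z := by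
  unfold lpN
  by_cases h : z.1 = 0
  · have h2 : z.2 ≠ 0 := fun h2 => hz (Prod.ext h h2)
    have : 0 < |z.2| := abs_pos.mpr h2
    positivity
  · have : 0 < |z.1| := abs_pos.mpr h
    positivity

lemma speed_pos (p : ℝ) (hp : 1 < p) (t : ℝ) : 0 < speed p t := by
  apply lpN_pos
  intro h0
  have hN := Np_pos p t
  have hr : HasDerivAt (rho p) 0 t := by
    rw [← h0]
    exact ((contDiff_rho p hp).differentiable one_ne_zero t).hasDerivAt
  have hn := ((contDiff_Np p hp).differentiable one_ne_zero t).hasDerivAt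
  have h1 : HasDerivAt (fun s => (rho p s).1) 0 t := by
    simpa using (HasFDerivAt.fst hr.hasFDerivAt).hasDerivAt
  have h2 : HasDerivAt (fun s => (rho p s).2) 0 t := by
    simpa using (HasFDerivAt.snd hr.hasFDerivAt).hasDerivAt
  have e1 := (h1.mul hn).unique (by
    have : (fun s => (rho p s).1) * Np p = Real.cos := by
      ext s; simp [rho, (Np_pos p s).ne']
    rw [this]; exact Real.hasDerivAt_cos t)
  have e2 := (h2.mul hn).unique (by
    have : (fun s => (rho p s).2) * Np p = Real.sin := by
      ext s; simp [rho, (Np_pos p s).ne']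
    rw [this]; exact Real.hasDerivAt_sin t)
  simp only [rho] at e1 e2
  have := Real.sin_sq_add_cos_sq t
  have e3 : Real.sin t ^ 2 + Real.cos t ^ 2 = 0 := by
    linear_combination (-Real.cos t) * e2 + Real.sin t * e1
  linarith

lemma speed_cont (p : ℝ) (hp : 1 < p) : Continuous (speed p) := by
  have h := (contDiff_rho p hp).continuous_deriv le_rfl
  unfold speed lpN
  have h0 : 0 ≤ p := by linarith
  have h1 : 0 ≤ 1 / p := by positivity
  exact ((h.fst.abs.rpow_const fun _ => Or.inr h0).add
    (h.snd.abs.rpow_const fun _ => Or.inr h0)).rpow_const fun _ => Or.inr h1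

lemma rho_add_pi (p t : ℝ) : rho p (t + Real.pi) = - rho p t := by
  ext <;> simp [rho, Np, neg_div]

lemma speed_periodic (p : ℝ) : Function.Periodic (speed p) Real.pi := by
  intro t
  unfold speed
  rw [← deriv_comp_add_const]
  have : (fun x => rho p (x + Real.pi)) = fun x => - rho p x := by
    ext1 x; exact rho_add_pi p x
  rw [this, deriv.fun_neg, lpN_neg]

lemma integral_pi (p : ℝ) (hp : 1 < p) (a : ℝ) :
    ∫ t in a..(a + Real.pi), speed p t = piP p := by
  have hset : {t : ℝ | t ∈ Set.Ico 0 (2 * Real.pi) ∧ rho p t ∈ Cp p} = Set.Ico 0 (2 * Real.pi) := by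
    ext t; simp [Cp, lpN_rho p hp]
  have hper := speed_periodic p
  have hi : ∀ x y, IntervalIntegrable (speed p) volume x y :=
    fun x y => (speed_cont p hp).intervalIntegrable x y
  have h1 : piP p = (∫ t in (0:ℝ)..(2 * Real.pi), speed p t) / 2 := by
    unfold piP muP
    rw [hset, intervalIntegral.integral_of_le (by positivity),
      MeasureTheory.integral_Ico_eq_integral_Ioo, MeasureTheory.integral_Ioc_eq_integral_Ioo]
  have h2 := intervalIntegral.integral_add_adjacent_intervals (hi 0 Real.pi) (hi Real.pi (2 * Real.pi))
  have h3 := hper.intervalIntegral_add_eq 0 Real.pi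
  have h4 := hper.intervalIntegral_add_eq a 0
  rw [zero_add] at h3 h4
  rw [← two_mul] at h3
  rw [h1, ← h2, h4, ← h3]; ring

/-- Abstract monotonicity lemma. -/
lemma mono_aux (p : ℝ) (hp : 1 < p) (x y z : ℝ × ℝ) (α β : ℝ) (hα : 0 ≤ α) (hβ : 0 ≤ β)
    (hx : lpN p x = 1) (hy : lpN p y = 1) (hz : lpN p z = 1) (h : y = α • x + β • z) :
    lpN p (x - y) ≤ lpN p (x - z) := by
  have hs : 1 ≤ α + β := by
    have := lpN_add p hp (α • x) (β • z)
    rw [← h, hy, lpN_smul p hp, lpN_smul p hp, hx, hz, abs_of_nonneg hα, abs_of_nonneg hβ] at this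
    linarith
  set s := α + β with hsd
  have hs0 : 0 < s := by linarith
  have hy' : ∀ c : ℝ, c • y = (c * α) • x + (c * β) • z := by
    intro c; rw [h, smul_add, smul_smul, smul_smul]
  have e1 : x - y = (β / s) • (x - z) + (1 / s - 1) • y := by
    rw [hy']
    have : x - y = x - (α • x + β • z) := by rw [h]
    rw [this]
    ext <;> simp <;> field_simp <;> rw [hsd] <;> ring
  have e2 : z = (α / s) • (z - x) + (1 / s) • y := by
    rw [hy']
    ext <;> simp <;> field_simp <;> rw [hsd] <;> ring
  have t1 := lpN_add p hp ((β / s) • (x - z)) ((1 / s - 1) • y)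
  have t2 := lpN_add p hp ((α / s) • (z - x)) ((1 / s) • y)
  have hle : 1 / s ≤ 1 := by rw [div_le_one hs0]; exact hs
  rw [← e1, lpN_smul p hp, lpN_smul p hp, hy, abs_of_nonneg (by positivity),
    abs_of_nonpos (by linarith)] at t1
  rw [← e2, lpN_smul p hp, lpN_smul p hp, hy, hz, abs_of_nonneg (by positivity),
    abs_of_nonneg (by positivity), ← neg_sub x z, lpN_neg] at t2
  have : β / s + α / s = 1 := by rw [← add_div, add_comm β α]; exact div_self hs0.ne'
  have h5 : lpN p (x - z) = β / s * lpN p (x - z) + α / s * lpN p (x - z) := by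
    rw [← add_mul, this, one_mul]
  linarith

lemma chord_mono (p : ℝ) (hp : 1 < p) (a b c : ℝ) (hab : a ≤ b) (hbc : b ≤ c)
    (hc : c ≤ a + Real.pi) : lpN p (rho p a - rho p b) ≤ lpN p (rho p a - rho p c) := by
  rcases hc.eq_or_lt with rfl | hc
  · have h1 : rho p a - rho p (a + Real.pi) = (2:ℝ) • rho p a := by
      rw [rho_add_pi, sub_neg_eq_add, two_smul]
    have h2 := lpN_add p hp (rho p a) (-rho p b)
    rw [lpN_neg, lpN_rho p hp, lpN_rho p hp, ← sub_eq_add_neg] at h2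
    rw [h1, lpN_smul p hp, lpN_rho p hp]
    norm_num at h2 ⊢
    exact h2
  rcases (hab.trans hbc).eq_or_lt with rfl | hac
  · have : b = a := le_antisymm hbc hab
    rw [this]
  have hS : 0 < Real.sin (c - a) := Real.sin_pos_of_pos_of_lt_pi (by linarith) (by linarith)
  have hS1 : 0 ≤ Real.sin (c - b) := Real.sin_nonneg_of_nonneg_of_le_pi (by linarith) (by linarith)
  have hS2 : 0 ≤ Real.sin (b - a) := Real.sin_nonneg_of_nonneg_of_le_pi (by linarith) (by linarith)
  have na := Np_pos p a
  have nb := Np_pos p b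
  have nc := Np_pos p c
  refine mono_aux p hp _ _ _ (Real.sin (c - b) * Np p a / (Np p b * Real.sin (c - a)))
    (Real.sin (b - a) * Np p c / (Np p b * Real.sin (c - a))) (by positivity) (by positivity)
    (lpN_rho p hp a) (lpN_rho p hp b) (lpN_rho p hp c) ?_
  have g1 : Real.sin (c - a) * Real.cos b
      = Real.sin (c - b) * Real.cos a + Real.sin (b - a) * Real.cos c := by
    simp only [Real.sin_sub]; ring
  have g2 : Real.sin (c - a) * Real.sin b
      = Real.sin (c - b) * Real.sin a + Real.sin (b - a) * Real.sin c := by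
    simp only [Real.sin_sub]; ring
  ext
  · simp only [rho, Prod.fst_add, Prod.smul_fst, smul_eq_mul]
    field_simp
    linarith
  · simp only [rho, Prod.snd_add, Prod.smul_snd, smul_eq_mul]
    field_simp
    linarith

lemma exists_arc (p : ℝ) (hp : 1 < p) (a c u : ℝ) (hac : a ≤ c) (hu : 0 ≤ u)
    (huc : u ≤ ∫ t in a..c, speed p t) : ∃ b, a ≤ b ∧ b ≤ c ∧ ∫ t in a..b, speed p t = u := by
  have hcont : Continuous fun b => ∫ t in a..b, speed p t :=
    intervalIntegral.continuous_primitive (fun x y => (speed_cont p hp).intervalIntegrable x y) a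
  have := intermediate_value_Icc hac hcont.continuousOn
  obtain ⟨b, hb, hb'⟩ := this ⟨by simpa using hu, huc⟩
  exact ⟨b, hb.1, hb.2, hb'⟩

/-- For every `p > 1`, the function `L_p` is increasing on `[0, π_p]`. -/
theorem stmt_12 (p : ℝ) (hp : 1 < p) :
    ∀ u u' : ℝ, 0 ≤ u → u ≤ u' → u' ≤ piP p → chordMin p u ≤ chordMin p u' := by
  intro u u' hu huu hu'
  unfold chordMin
  have hpi := Real.pi_pos
  apply le_csInf
  · obtain ⟨b, h1, h2, h3⟩ := exists_arc p hp 0 (0 + Real.pi) u' (by linarith) (hu.trans huu)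
      (by rw [integral_pi p hp]; exact hu')
    exact ⟨_, 0, b, h1, by linarith, h3, rfl⟩
  · rintro d ⟨a, c, hac, -, hint, rfl⟩
    have hc : c ≤ a + Real.pi := by
      by_contra! hlt
      have hi : ∀ x y, IntervalIntegrable (speed p) volume x y :=
        fun x y => (speed_cont p hp).intervalIntegrable x y
      have h1 := intervalIntegral.integral_add_adjacent_intervals (hi a (a + Real.pi))
        (hi (a + Real.pi) c)
      have h2 := intervalIntegral.intervalIntegral_pos_of_pos (hi (a + Real.pi) c)
        (speed_pos p hp) hlt
      rw [integral_pi p hp] at h1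
      linarith
    obtain ⟨b, h1, h2, h3⟩ := exists_arc p hp a c u hac hu (by rw [hint]; exact huu)
    refine le_trans ?_ (chord_mono p hp a b c h1 h2 hc)
    refine csInf_le ⟨0, ?_⟩ ⟨a, b, h1, by linarith, h3, rfl⟩
    rintro d ⟨_, _, _, _, _, rfl⟩
    exact lpN_nonneg _ _
end

section
/- For every real p > 1, L_p(e_p) = γ_p: among all pairs of points of C_p whose joining arc has μ_p-length e_p, the minimum possible ℓ_p chord length equals γ_p. Equivalently, the shortest chord subtending an arc of length e_p is attained by an arc symmetric about the x-axis when p ∈ (1,2], and by an arc symmetric about the line y = x when p ∈ [2,∞). -/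
open Real MeasureTheory intervalIntegral

/-- log cosh -/
noncomputable def qL (x : ℝ) : ℝ := Real.log (Real.cosh x)

/-- conjugate-type function of log cosh -/
noncomputable def qJ (x : ℝ) : ℝ := x * Real.tanh x - qL x

/-- log sinh analogue of `qJ` -/
noncomputable def qP (x : ℝ) : ℝ := x * (Real.cosh x / Real.sinh x) - Real.log (Real.sinh x)

theorem q_hasDerivAt_tanh (x : ℝ) : HasDerivAt Real.tanh (1 - Real.tanh x ^ 2) x := by
  have h : Real.tanh = fun x => Real.sinh x / Real.cosh x := by
    funext x; exact Real.tanh_eq_sinh_div_cosh x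
  have hc := (Real.cosh_pos x).ne'
  rw [h]
  have := (Real.hasDerivAt_sinh x).div (Real.hasDerivAt_cosh x) hc
  refine HasDerivAt.congr_deriv (f := fun x => Real.sinh x / Real.cosh x) this ?_
  field_simp

theorem q_hasDerivAt_L (x : ℝ) : HasDerivAt qL (Real.tanh x) x := by
  have := (Real.hasDerivAt_cosh x).log (Real.cosh_pos x).ne'
  rw [Real.tanh_eq_sinh_div_cosh]
  exact this

theorem q_hasDerivAt_J (x : ℝ) : HasDerivAt qJ (x * (1 - Real.tanh x ^ 2)) x := by
  have := ((hasDerivAt_id x).mul (q_hasDerivAt_tanh x)).sub (q_hasDerivAt_L x)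
  refine HasDerivAt.congr_deriv (f := qJ) this ?_
  simp only [id]; ring

theorem q_tanh_strictMono : StrictMono Real.tanh := by
  apply strictMono_of_deriv_pos
  intro x
  rw [(q_hasDerivAt_tanh x).deriv]
  rw [Real.tanh_eq_sinh_div_cosh]
  have hc := Real.cosh_pos x
  have := Real.cosh_sq x
  rw [div_pow, sub_pos, div_lt_one (by positivity)]
  linarith

theorem q_sech_pos (x : ℝ) : 0 < 1 - Real.tanh x ^ 2 := by
  rw [Real.tanh_eq_sinh_div_cosh]
  have hc := Real.cosh_pos x
  have := Real.cosh_sq x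
  rw [div_pow, sub_pos, div_lt_one (by positivity)]
  linarith

theorem q_tanh_pos {x : ℝ} (hx : 0 < x) : 0 < Real.tanh x := by
  simpa using q_tanh_strictMono hx

theorem q_tanh_lt_one (x : ℝ) : Real.tanh x < 1 := by
  nlinarith [q_sech_pos x]

theorem q_L_even (x : ℝ) : qL (-x) = qL x := by simp [qL]
theorem q_J_even (x : ℝ) : qJ (-x) = qJ x := by simp [qJ, qL]
theorem q_L_abs (x : ℝ) : qL |x| = qL x := by
  rcases abs_choice x with h | h <;> simp [h, q_L_even]
theorem q_J_abs (x : ℝ) : qJ |x| = qJ x := by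
  rcases abs_choice x with h | h <;> simp [h, q_J_even]

theorem q_L_strictMonoOn : StrictMonoOn qL (Set.Ici 0) := by
  apply strictMonoOn_of_deriv_pos (convex_Ici 0)
  · exact fun x _ => (q_hasDerivAt_L x).continuousAt.continuousWithinAt
  · intro x hx
    rw [interior_Ici] at hx
    rw [(q_hasDerivAt_L x).deriv]
    exact q_tanh_pos hx

theorem q_J_strictMonoOn : StrictMonoOn qJ (Set.Ici 0) := by
  apply strictMonoOn_of_deriv_pos (convex_Ici 0)
  · exact fun x _ => (q_hasDerivAt_J x).continuousAt.continuousWithinAt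
  · intro x hx
    rw [interior_Ici] at hx
    rw [(q_hasDerivAt_J x).deriv]
    exact mul_pos hx (q_sech_pos x)

theorem q_L_le {x y : ℝ} (h : |x| ≤ |y|) : qL x ≤ qL y := by
  rw [← q_L_abs x, ← q_L_abs y]
  exact q_L_strictMonoOn.monotoneOn (Set.mem_Ici.2 (abs_nonneg _)) (Set.mem_Ici.2 (abs_nonneg _)) h

theorem q_L_lt {x y : ℝ} (h : |x| < |y|) : qL x < qL y := by
  rw [← q_L_abs x, ← q_L_abs y]
  exact q_L_strictMonoOn (Set.mem_Ici.2 (abs_nonneg _)) (Set.mem_Ici.2 (abs_nonneg _)) h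

theorem q_J_le {x y : ℝ} (h : |x| ≤ |y|) : qJ x ≤ qJ y := by
  rw [← q_J_abs x, ← q_J_abs y]
  exact q_J_strictMonoOn.monotoneOn (Set.mem_Ici.2 (abs_nonneg _)) (Set.mem_Ici.2 (abs_nonneg _)) h

theorem q_J_lt {x y : ℝ} (h : |x| < |y|) : qJ x < qJ y := by
  rw [← q_J_abs x, ← q_J_abs y]
  exact q_J_strictMonoOn (Set.mem_Ici.2 (abs_nonneg _)) (Set.mem_Ici.2 (abs_nonneg _)) h

/-- lower bound: `|x| - log 2 < log cosh x`. -/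
theorem q_L_gt (x : ℝ) : |x| - Real.log 2 < qL x := by
  rw [← q_L_abs x, qL, Real.cosh_eq, Real.log_div (by positivity) (by norm_num)]
  have : |x| < Real.log (Real.exp |x| + Real.exp (-|x|)) := by
    rw [Real.lt_log_iff_exp_lt (by positivity)]
    linarith [Real.exp_pos (-|x|)]
  linarith

theorem q_logsinh_lt {x : ℝ} (hx : 0 < x) : Real.log (Real.sinh x) < x - Real.log 2 := by
  have h1 := Real.sinh_pos_iff.2 hx
  have : Real.log (2 * Real.sinh x) < x := by
    rw [Real.log_lt_iff_lt_exp (by positivity), Real.sinh_eq]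
    linarith [Real.exp_pos (-x)]
  rw [Real.log_mul (by norm_num) h1.ne'] at this
  linarith

theorem q_J_lt_log2 (x : ℝ) : qJ x < Real.log 2 := by
  rw [← q_J_abs x, qJ]
  have h := q_L_gt |x|
  rw [abs_abs] at h
  have : |x| * Real.tanh |x| ≤ |x| * 1 :=
    mul_le_mul_of_nonneg_left (q_tanh_lt_one _).le (abs_nonneg x)
  linarith

theorem q_P_gt_log2 {x : ℝ} (hx : 0 < x) : Real.log 2 < qP x := by
  have h := q_logsinh_lt hx
  have h1 := Real.sinh_pos_iff.2 hx
  have h2 : 1 ≤ Real.cosh x / Real.sinh x := by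
    rw [le_div_iff₀ h1]; linarith [Real.sinh_lt_cosh x]
  unfold qP
  nlinarith

theorem q_hasDerivAt_logsinh {x : ℝ} (hx : Real.sinh x ≠ 0) :
    HasDerivAt (fun x => Real.log (Real.sinh x)) (Real.cosh x / Real.sinh x) x :=
  (Real.hasDerivAt_sinh x).log hx

theorem q_hasDerivAt_P {x : ℝ} (hx : 0 < x) : HasDerivAt qP (- (x / Real.sinh x ^ 2)) x := by
  have h1 := (Real.sinh_pos_iff.2 hx).ne'
  have := ((hasDerivAt_id x).mul ((Real.hasDerivAt_cosh x).div (Real.hasDerivAt_sinh x) h1)).sub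
    (q_hasDerivAt_logsinh h1)
  refine HasDerivAt.congr_deriv (f := qP) this ?_
  have := Real.cosh_sq x
  rw [show (id x : ℝ) = x from rfl]
  simp only [Pi.div_apply]
  field_simp
  rw [this]; ring

theorem q_P_strictAntiOn : StrictAntiOn qP (Set.Ioi 0) := by
  apply strictAntiOn_of_deriv_neg (convex_Ioi 0)
  · exact fun x hx => (q_hasDerivAt_P hx).continuousAt.continuousWithinAt
  · intro x hx
    rw [interior_Ioi] at hx
    rw [(q_hasDerivAt_P hx).deriv]
    have h1 := (Real.sinh_pos_iff.2 hx)
    have : 0 < x := hx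
    have : 0 < x / Real.sinh x ^ 2 := by positivity
    linarith


/-- cosh-type weight -/
noncomputable def qWc (p κ x : ℝ) : ℝ := qL (x + κ) - qL (p * x) / p
/-- companion of `qWc` -/
noncomputable def qDJ (p κ x : ℝ) : ℝ := qJ (x + κ) - qJ (p * x) / p
/-- sinh-type weight -/
noncomputable def qWs (p κ x : ℝ) : ℝ := Real.log (Real.sinh (x + κ)) - qL (p * x) / p
/-- auxiliary function -/
noncomputable def qk (c x : ℝ) : ℝ := x * (1 - Real.tanh x ^ 2) - c * Real.tanh x

theorem q_hasDerivAt_comp_mul {f : ℝ → ℝ} {f' p x : ℝ} (hp : 0 < p)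
    (h : HasDerivAt f f' (p * x)) : HasDerivAt (fun x => f (p * x) / p) f' x := by
  have h1 : HasDerivAt (fun x : ℝ => p * x) p x := by
    simpa using (hasDerivAt_id x).const_mul p
  have := (h.comp x h1).div_const p
  refine this.congr_deriv ?_
  field_simp

theorem q_hasDerivAt_Wc {p : ℝ} (hp : 0 < p) (κ x : ℝ) :
    HasDerivAt (qWc p κ) (Real.tanh (x + κ) - Real.tanh (p * x)) x :=
  ((q_hasDerivAt_L (x + κ)).comp_add_const x κ).sub (q_hasDerivAt_comp_mul hp (q_hasDerivAt_L _))

theorem q_hasDerivAt_DJ {p : ℝ} (hp : 0 < p) (κ x : ℝ) :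
    HasDerivAt (qDJ p κ) ((x + κ) * (1 - Real.tanh (x + κ) ^ 2)
      - (p * x) * (1 - Real.tanh (p * x) ^ 2)) x :=
  ((q_hasDerivAt_J (x + κ)).comp_add_const x κ).sub (q_hasDerivAt_comp_mul hp (q_hasDerivAt_J _))

theorem q_hasDerivAt_k (u x : ℝ) :
    HasDerivAt (qk (1 - 2 * (u * Real.tanh u)))
      ((1 - Real.tanh x ^ 2) * (2 * (u * Real.tanh u - x * Real.tanh x))) x := by
  have h := q_hasDerivAt_tanh x
  have := ((hasDerivAt_id x).mul ((h.pow 2).const_sub 1)).sub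
    (h.const_mul (1 - 2 * (u * Real.tanh u)))
  refine HasDerivAt.congr_deriv (f := qk (1 - 2 * (u * Real.tanh u))) this ?_
  simp only [id, Pi.pow_apply]
  push_cast
  ring

theorem q_xtanh_lt {x y : ℝ} (hx : 0 ≤ x) (h : x < y) : x * Real.tanh x < y * Real.tanh y := by
  have h1 := q_tanh_strictMono h
  have h2 : 0 ≤ Real.tanh x := by
    have := q_tanh_strictMono.monotone hx
    simpa using this
  nlinarith

theorem q_k_odd (c x : ℝ) : qk c (-x) = - qk c x := by
  simp [qk, Real.tanh_neg]; ring

theorem q_k_zero (c : ℝ) : qk c 0 = 0 := by simp [qk]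

theorem q_k_mono (u : ℝ) : StrictMonoOn (qk (1 - 2 * (u * Real.tanh u))) (Set.Icc 0 u) := by
  apply strictMonoOn_of_deriv_pos (convex_Icc 0 u)
  · exact fun x _ => (q_hasDerivAt_k u x).continuousAt.continuousWithinAt
  · intro x hx
    rw [interior_Icc] at hx
    rw [(q_hasDerivAt_k u x).deriv]
    have := q_xtanh_lt hx.1.le hx.2
    exact mul_pos (q_sech_pos x) (by linarith)

theorem q_k_anti {u : ℝ} (hu : 0 < u) :
    StrictAntiOn (qk (1 - 2 * (u * Real.tanh u))) (Set.Ici u) := by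
  apply strictAntiOn_of_deriv_neg (convex_Ici u)
  · exact fun x _ => (q_hasDerivAt_k u x).continuousAt.continuousWithinAt
  · intro x hx
    rw [interior_Ici] at hx
    rw [(q_hasDerivAt_k u x).deriv]
    have := q_xtanh_lt hu.le hx
    exact mul_neg_of_pos_of_neg (q_sech_pos x) (by linarith)

theorem q_k_lt {u a b : ℝ} (h1 : -b ≤ a) (h2 : a < b) (h3 : b ≤ u) :
    qk (1 - 2 * (u * Real.tanh u)) a < qk (1 - 2 * (u * Real.tanh u)) b := by
  rcases le_or_gt 0 a with ha | ha
  · exact q_k_mono u ⟨ha, by linarith⟩ ⟨by linarith, h3⟩ h2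
  · have e1 := q_k_mono u (a := 0) (b := -a) ⟨le_rfl, by linarith⟩ ⟨by linarith, by linarith⟩
      (by linarith)
    have e2 := q_k_mono u (a := 0) (b := b) ⟨le_rfl, by linarith⟩ ⟨by linarith, by linarith⟩
      (by linarith)
    rw [q_k_odd, q_k_zero] at e1
    rw [q_k_zero] at e2
    linarith

theorem q_hasDerivAt_Psi {p : ℝ} (hp : 0 < p) (κ c x : ℝ) :
    HasDerivAt (fun x => qDJ p κ x - c * qWc p κ x) (qk c (x + κ) - qk c (p * x)) x := by
  refine ((q_hasDerivAt_DJ hp κ x).sub ((q_hasDerivAt_Wc hp κ x).const_mul c)).congr_deriv ?_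
  unfold qk; ring

theorem q_PsiA {p κ u s t : ℝ} (hp : 1 < p) (ht : -κ ≤ (p + 1) * t) (hts : t < s)
    (hs : (p - 1) * s ≤ κ) (hu : s + κ ≤ u) :
    qDJ p κ t - (1 - 2 * (u * Real.tanh u)) * qWc p κ t
      < qDJ p κ s - (1 - 2 * (u * Real.tanh u)) * qWc p κ s := by
  have hp0 : 0 < p := by linarith
  have : StrictMonoOn (fun x => qDJ p κ x - (1 - 2 * (u * Real.tanh u)) * qWc p κ x)
      (Set.Icc t s) := by
    apply strictMonoOn_of_deriv_pos (convex_Icc t s)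
    · exact fun x _ => (q_hasDerivAt_Psi hp0 κ _ x).continuousAt.continuousWithinAt
    · intro x hx
      rw [interior_Icc] at hx
      rw [(q_hasDerivAt_Psi hp0 κ _ x).deriv, sub_pos]
      obtain ⟨h1, h2⟩ := hx
      apply q_k_lt <;> nlinarith
  exact this ⟨le_rfl, hts.le⟩ ⟨hts.le, le_rfl⟩ hts

theorem q_PsiB {p κ u s t : ℝ} (hp : 1 < p) (hu0 : 0 < u) (ht : κ ≤ (p - 1) * t) (hts : t ≤ s)
    (hu : u ≤ t + κ) :
    qDJ p κ t - (1 - 2 * (u * Real.tanh u)) * qWc p κ t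
      ≤ qDJ p κ s - (1 - 2 * (u * Real.tanh u)) * qWc p κ s := by
  have hp0 : 0 < p := by linarith
  have : MonotoneOn (fun x => qDJ p κ x - (1 - 2 * (u * Real.tanh u)) * qWc p κ x)
      (Set.Icc t s) := by
    apply monotoneOn_of_deriv_nonneg (convex_Icc t s)
    · exact fun x _ => (q_hasDerivAt_Psi hp0 κ _ x).continuousAt.continuousWithinAt
    · exact fun x _ => (q_hasDerivAt_Psi hp0 κ _ x).differentiableAt.differentiableWithinAt
    · intro x hx
      rw [interior_Icc] at hx
      rw [(q_hasDerivAt_Psi hp0 κ _ x).deriv, sub_nonneg]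
      obtain ⟨h1, h2⟩ := hx
      have hxx : x + κ ≤ p * x := by nlinarith
      exact (q_k_anti hu0).antitoneOn (Set.mem_Ici.2 (by linarith)) (Set.mem_Ici.2 (by linarith)) hxx
  exact this ⟨le_rfl, hts⟩ ⟨hts, le_rfl⟩ hts

theorem q_Wc_mono {p κ s t : ℝ} (hp : 1 < p) (hts : t < s) (hs : (p - 1) * s ≤ κ) :
    qWc p κ t < qWc p κ s := by
  have hp0 : 0 < p := by linarith
  have : StrictMonoOn (qWc p κ) (Set.Icc t s) := by
    apply strictMonoOn_of_deriv_pos (convex_Icc t s)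
    · exact fun x _ => (q_hasDerivAt_Wc hp0 κ x).continuousAt.continuousWithinAt
    · intro x hx
      rw [interior_Icc] at hx
      rw [(q_hasDerivAt_Wc hp0 κ x).deriv, sub_pos]
      apply q_tanh_strictMono
      nlinarith [hx.1, hx.2]
  exact this ⟨le_rfl, hts.le⟩ ⟨hts.le, le_rfl⟩ hts

theorem q_Wc_anti {p κ s t : ℝ} (hp : 1 < p) (hts : t < s) (ht : κ ≤ (p - 1) * t) :
    qWc p κ s < qWc p κ t := by
  have hp0 : 0 < p := by linarith
  have : StrictAntiOn (qWc p κ) (Set.Icc t s) := by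
    apply strictAntiOn_of_deriv_neg (convex_Icc t s)
    · exact fun x _ => (q_hasDerivAt_Wc hp0 κ x).continuousAt.continuousWithinAt
    · intro x hx
      rw [interior_Icc] at hx
      rw [(q_hasDerivAt_Wc hp0 κ x).deriv, sub_neg]
      apply q_tanh_strictMono
      nlinarith [hx.1, hx.2]
  exact this ⟨le_rfl, hts.le⟩ ⟨hts.le, le_rfl⟩ hts

theorem q_div_p_le {p a b : ℝ} (hp : 0 < p) (h : a ≤ b) : a / p ≤ b / p :=
  div_le_div_of_nonneg_right h hp.le

/-! ### Case II -/
theorem q_caseII {p κ s τ : ℝ} (hp : 1 < p) (hκ : 0 < κ) (hs : 0 < s + κ) (hτ : 0 < τ - κ)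
    (h : qWs p κ s = Real.log (Real.sinh (τ - κ)) - qL (p * τ) / p) :
    qP (τ - κ) - qJ (p * τ) / p < qP (s + κ) - qJ (p * s) / p := by
  have hp0 : 0 < p := by linarith
  have hmono : s < τ := by
    by_contra hc
    push Not at hc
    have e1 : Real.log (Real.sinh (τ + κ)) - qL (p * τ) / p ≤ qWs p κ s := by
      have : MonotoneOn (qWs p κ) (Set.Icc τ s) := by
        have hd : ∀ x ∈ Set.Icc τ s, HasDerivAt (qWs p κ)
            (Real.cosh (x + κ) / Real.sinh (x + κ) - Real.tanh (p * x)) x := by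
          intro x hx
          have : 0 < Real.sinh (x + κ) := Real.sinh_pos_iff.2 (by linarith [hx.1])
          exact ((q_hasDerivAt_logsinh this.ne').comp_add_const x κ).sub
            (q_hasDerivAt_comp_mul hp0 (q_hasDerivAt_L _))
        apply monotoneOn_of_deriv_nonneg (convex_Icc τ s)
        · exact fun x hx => (hd x hx).continuousAt.continuousWithinAt
        · exact fun x hx => (hd x (interior_subset hx)).differentiableAt.differentiableWithinAt
        · intro x hx
          have hx := interior_subset hx
          rw [(hd x hx).deriv]
          have h1 : 0 < Real.sinh (x + κ) := Real.sinh_pos_iff.2 (by linarith [hx.1])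
          have h2 : 1 ≤ Real.cosh (x + κ) / Real.sinh (x + κ) := by
            rw [le_div_iff₀ h1]; linarith [Real.sinh_lt_cosh (x + κ)]
          linarith [q_tanh_lt_one (p * x)]
      exact this ⟨le_rfl, hc⟩ ⟨hc, le_rfl⟩ hc
    have e2 : Real.log (Real.sinh (τ - κ)) < Real.log (Real.sinh (τ + κ)) :=
      Real.log_lt_log (Real.sinh_pos_iff.2 hτ) (Real.sinh_lt_sinh.2 (by linarith))
    linarith
  have habs : |p * s| < |p * τ| := by
    rw [abs_mul, abs_mul]
    apply mul_lt_mul_of_pos_left _ (by positivity)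
    rw [abs_lt]
    constructor <;> linarith [le_abs_self τ]
  have h1 := q_L_lt habs
  have h2 := q_J_lt habs
  have h1' := div_lt_div_of_pos_right h1 hp0
  have h2' := div_lt_div_of_pos_right h2 hp0
  have h3 : s + κ < τ - κ := by
    by_contra hc
    push Not at hc
    have := Real.log_le_log (Real.sinh_pos_iff.2 hτ) (Real.sinh_le_sinh.2 hc)
    unfold qWs at h
    linarith
  have h4 := q_P_strictAntiOn (Set.mem_Ioi.2 hs) (Set.mem_Ioi.2 hτ) h3
  linarith

/-! ### Case I -/
theorem q_Lsub_anti {x y : ℝ} (h : x ≤ y) : qL y - y ≤ qL x - x := by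
  have : Antitone (fun x => qL x - x) := by
    have hd : ∀ x, HasDerivAt (fun x => qL x - x) (Real.tanh x - 1) x := fun x =>
      (q_hasDerivAt_L x).sub (hasDerivAt_id x)
    apply antitone_of_deriv_nonpos
    · exact fun x => (hd x).differentiableAt
    · intro x
      rw [(hd x).deriv]
      linarith [q_tanh_lt_one x]
  exact this h

theorem q_logcoth {y : ℝ} (hy : 0 < y) :
    0 < qL y - Real.log (Real.sinh y) ∧
    qL y - Real.log (Real.sinh y) ≤ 1 / (2 * (Real.sinh y * Real.cosh y)) := by
  have h1 := Real.sinh_pos_iff.2 hy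
  have h2 := Real.cosh_pos y
  have h3 := Real.sinh_lt_cosh y
  have h0 : 0 < qL y - Real.log (Real.sinh y) := by
    have := Real.log_lt_log h1 h3
    unfold qL; linarith
  refine ⟨h0, ?_⟩
  have e : qL y - Real.log (Real.sinh y) = Real.log (Real.cosh y / Real.sinh y) := by
    rw [Real.log_div h2.ne' h1.ne', qL]
  have h4 := Real.self_le_sinh_iff.2 h0.le
  refine h4.trans (le_of_eq ?_)
  rw [e, Real.sinh_log (by positivity)]
  have := Real.cosh_sq y
  field_simp
  rw [this]; ring

theorem q_caseI {p κ s t : ℝ} (hp : 1 < p) (hκ : 0 < κ) (hs : 0 < s + κ)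
    (h : qWs p κ s = qWc p κ t) :
    qDJ p κ t < qP (s + κ) - qJ (p * s) / p := by
  have hp0 : 0 < p := by linarith
  have hp1 : 1 / p < 1 := by rw [div_lt_one hp0]; exact hp
  have hlog2 : 0 < Real.log 2 := Real.log_pos (by norm_num)
  have htm : (p - 1) * t < κ := by
    by_contra hc
    push Not at hc
    have ht0 : 0 < t := by
      by_contra h0; push Not at h0; nlinarith
    have a1 := q_Lsub_anti (show t + κ ≤ p * t by linarith)
    have a2 := q_L_gt (t + κ)
    rw [abs_of_pos (by linarith)] at a2
    have a3 := q_logsinh_lt hs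
    have a4 := q_L_gt (p * s)
    have a5 := le_abs_self (p * s)
    have a6 := q_div_p_le hp0 a1
    have a7 : (p * s - Real.log 2) / p ≤ qL (p * s) / p := q_div_p_le hp0 (by linarith)
    unfold qWs qWc at h
    have a8 : 0 < (1 - 1 / p) * (qL (t + κ) - (t + κ) + Real.log 2) :=
      mul_pos (by linarith) (by linarith)
    have e1 : (p * s - Real.log 2) / p = s - Real.log 2 * (1 / p) := by field_simp
    have e2 : (qL (p * t) - p * t) / p = qL (p * t) / p - t := by field_simp
    have e3 : (qL (t + κ) - (t + κ)) / p = (qL (t + κ) - (t + κ)) * (1 / p) := by field_simp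
    rw [e1] at a7
    rw [e2, e3] at a6
    nlinarith
  rcases le_or_gt |t + κ| |p * t| with hcase | hcase
  · have b1 := q_div_p_le hp0 (q_J_le hcase)
    have b2 := q_J_lt_log2 (t + κ)
    have b3 := q_P_gt_log2 hs
    have b4 := q_div_p_le hp0 (q_J_lt_log2 (p * s)).le
    unfold qDJ
    have b5 : (1 - 1 / p) * qJ (t + κ) < (1 - 1 / p) * Real.log 2 :=
      mul_lt_mul_of_pos_left b2 (by linarith)
    have e1 : qJ (t + κ) / p = qJ (t + κ) * (1 / p) := by field_simp
    have e2 : Real.log 2 / p = Real.log 2 * (1 / p) := by field_simp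
    rw [e1] at b1
    rw [e2] at b4
    nlinarith
  · rw [abs_mul, abs_of_pos hp0] at hcase
    have ht1 : 0 < t + κ := by
      by_contra hc
      push Not at hc
      rw [abs_of_nonpos hc, abs_of_neg (by linarith)] at hcase
      nlinarith
    rw [abs_of_pos ht1] at hcase
    have ht2 : -κ ≤ (p + 1) * t := by
      have := neg_abs_le t
      nlinarith
    have hWlt : qWs p κ s < qWc p κ s := by
      have := (q_logcoth hs).1
      unfold qWs qWc; linarith
    have hst : t < s := by
      by_contra hc
      push Not at hc
      rcases hc.lt_or_eq with hc | hc
      · have := q_Wc_mono hp hc htm.le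
        linarith
      · rw [hc] at h hWlt; linarith
    obtain ⟨u, hu0, huy, hΨ⟩ : ∃ u, 0 < u ∧ u ≤ s + κ ∧
        qDJ p κ t - (1 - 2 * (u * Real.tanh u)) * qWc p κ t
          ≤ qDJ p κ s - (1 - 2 * (u * Real.tanh u)) * qWc p κ s := by
      rcases le_or_gt ((p - 1) * s) κ with hsm | hsm
      · exact ⟨s + κ, hs, le_rfl, (q_PsiA hp ht2 hst hsm le_rfl).le⟩
      · have hr : 0 < p - 1 := by linarith
        have em : (p - 1) * (κ / (p - 1)) = κ := by field_simp
        have hm0 : 0 < κ / (p - 1) := by positivity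
        have htm' : t < κ / (p - 1) := by rw [lt_div_iff₀ hr]; linarith
        have hsm' : κ / (p - 1) < s := by rw [div_lt_iff₀ hr]; linarith
        refine ⟨κ / (p - 1) + κ, by linarith, by linarith, ?_⟩
        exact (q_PsiA hp ht2 htm' em.le le_rfl).le.trans
          (q_PsiB hp (by linarith) em.ge hsm'.le le_rfl)
    obtain ⟨l1, l2⟩ := q_logcoth hs
    set y := s + κ with hy
    have hsy := Real.sinh_pos_iff.2 hs
    have hcy := Real.cosh_pos y
    have hPJ : qP y - qJ y = y / (Real.sinh y * Real.cosh y) + (qL y - Real.log (Real.sinh y)) := by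
      unfold qP qJ
      rw [Real.tanh_eq_sinh_div_cosh]
      have := Real.cosh_sq y
      field_simp
      linear_combination y * this
    have hW : qWc p κ s - qWc p κ t = qL y - Real.log (Real.sinh y) := by
      rw [← h]; unfold qWc qWs; ring
    have hut : u * Real.tanh u ≤ y := by
      have := q_tanh_lt_one u
      nlinarith
    have hDs : qDJ p κ s = qJ y - qJ (p * s) / p := by unfold qDJ; rfl
    set l := qL y - Real.log (Real.sinh y) with hl
    have f1 : 2 * (u * Real.tanh u) * l ≤ y / (Real.sinh y * Real.cosh y) := by
      have g1 : 2 * (u * Real.tanh u) * l ≤ 2 * y * l := by nlinarith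
      have g2 : 2 * y * l ≤ 2 * y * (1 / (2 * (Real.sinh y * Real.cosh y))) :=
        mul_le_mul_of_nonneg_left l2 (by linarith)
      refine (g1.trans g2).trans (le_of_eq ?_)
      field_simp
    have f2 : (1 - 2 * (u * Real.tanh u)) * (qWc p κ s - qWc p κ t)
        = l - 2 * (u * Real.tanh u) * l := by rw [hW]; ring
    linarith


theorem q_sinh_slope {x y : ℝ} (hx : 0 < x) (hxy : x < y) :
    y * Real.sinh x < x * Real.sinh y := by
  have hconv : StrictConvexOn ℝ (Set.Ici (0 : ℝ)) Real.sinh := by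
    apply StrictMonoOn.strictConvexOn_of_deriv (convex_Ici 0) Real.continuous_sinh.continuousOn
    rw [Real.deriv_sinh, interior_Ici]
    exact Real.cosh_strictMonoOn.mono Set.Ioi_subset_Ici_self
  have hy : 0 < y := hx.trans hxy
  have ha : 0 < 1 - x / y := by rw [sub_pos, div_lt_one hy]; exact hxy
  have hb : 0 < x / y := by positivity
  have := hconv.2 (Set.mem_Ici.2 le_rfl) (Set.mem_Ici.2 hy.le) hy.ne ha hb (by ring)
  simp only [smul_eq_mul, Real.sinh_zero, mul_zero, zero_add] at this
  rw [div_mul_cancel₀ _ hy.ne', div_mul_eq_mul_div, lt_div_iff₀ hy] at this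
  linarith

theorem q_k_sign {x y : ℝ} (hx : 0 < x) (hxy : x < y) :
    y * (1 - Real.tanh y ^ 2) / Real.tanh y * Real.tanh x < x * (1 - Real.tanh x ^ 2)
    ∧ y * (1 - Real.tanh y ^ 2) < x * (1 - Real.tanh x ^ 2) / Real.tanh x * Real.tanh y := by
  have hy := hx.trans hxy
  have hTx := q_tanh_pos hx
  have hTy := q_tanh_pos hy
  have key : y * (1 - Real.tanh y ^ 2) * Real.tanh x < x * (1 - Real.tanh x ^ 2) * Real.tanh y := by
    have h := q_sinh_slope (show 0 < 2 * x by linarith) (show 2 * x < 2 * y by linarith)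
    rw [Real.sinh_two_mul, Real.sinh_two_mul] at h
    have hcx := Real.cosh_pos x
    have hcy := Real.cosh_pos y
    have ex : 1 - Real.tanh x ^ 2 = 1 / Real.cosh x ^ 2 := by
      rw [Real.tanh_eq_sinh_div_cosh]
      have := Real.cosh_sq x
      field_simp; linarith
    have ey : 1 - Real.tanh y ^ 2 = 1 / Real.cosh y ^ 2 := by
      rw [Real.tanh_eq_sinh_div_cosh]
      have := Real.cosh_sq y
      field_simp; linarith
    rw [ex, ey, Real.tanh_eq_sinh_div_cosh, Real.tanh_eq_sinh_div_cosh]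
    rw [show y * (1 / Real.cosh y ^ 2) * (Real.sinh x / Real.cosh x)
      = (y * Real.sinh x * Real.cosh x) / (Real.cosh x ^ 2 * Real.cosh y ^ 2) by field_simp]
    rw [show x * (1 / Real.cosh x ^ 2) * (Real.sinh y / Real.cosh y)
      = (x * Real.sinh y * Real.cosh y) / (Real.cosh x ^ 2 * Real.cosh y ^ 2) by field_simp]
    apply div_lt_div_of_pos_right _ (by positivity)
    nlinarith
  constructor
  · rw [div_mul_eq_mul_div, div_lt_iff₀ hTy]; exact key
  · rw [div_mul_eq_mul_div, lt_div_iff₀ hTx]; exact key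

theorem q_hasDerivAt_K (c x : ℝ) : HasDerivAt (fun x => qJ x - c * qL x) (qk c x) x :=
  (q_hasDerivAt_J x).sub ((q_hasDerivAt_L x).const_mul c)

theorem q_K_mono {y : ℝ} {a b : ℝ} (hab : |a| < |b|) (hb : |b| ≤ y) :
    qJ a - (y * (1 - Real.tanh y ^ 2) / Real.tanh y) * qL a
      < qJ b - (y * (1 - Real.tanh y ^ 2) / Real.tanh y) * qL b := by
  have : StrictMonoOn (fun x => qJ x - (y * (1 - Real.tanh y ^ 2) / Real.tanh y) * qL x)
      (Set.Icc 0 y) := by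
    apply strictMonoOn_of_deriv_pos (convex_Icc 0 y)
    · exact fun x _ => (q_hasDerivAt_K _ x).continuousAt.continuousWithinAt
    · intro x hx
      rw [interior_Icc] at hx
      rw [(q_hasDerivAt_K _ x).deriv]
      have := (q_k_sign hx.1 hx.2).1
      unfold qk; linarith
  have h := this ⟨abs_nonneg a, hab.le.trans hb⟩ ⟨abs_nonneg b, hb⟩ hab
  simpa only [q_J_abs, q_L_abs] using h

theorem q_K_anti {y : ℝ} (hy : 0 < y) {a b : ℝ} (hab : |a| ≤ |b|) (ha : y ≤ |a|) :
    qJ b - (y * (1 - Real.tanh y ^ 2) / Real.tanh y) * qL b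
      ≤ qJ a - (y * (1 - Real.tanh y ^ 2) / Real.tanh y) * qL a := by
  have : StrictAntiOn (fun x => qJ x - (y * (1 - Real.tanh y ^ 2) / Real.tanh y) * qL x)
      (Set.Ici y) := by
    apply strictAntiOn_of_deriv_neg (convex_Ici y)
    · exact fun x _ => (q_hasDerivAt_K _ x).continuousAt.continuousWithinAt
    · intro x hx
      rw [interior_Ici] at hx
      rw [(q_hasDerivAt_K _ x).deriv]
      have := (q_k_sign hy hx).2
      unfold qk; linarith
  have h := this.antitoneOn (Set.mem_Ici.2 ha) (Set.mem_Ici.2 (ha.trans hab)) hab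
  simpa only [q_J_abs, q_L_abs] using h

theorem q_ell_mono {p s τ : ℝ} (hp : 1 < p) (hs : 0 ≤ s) (h : s ≤ τ) :
    qL τ - qL s ≤ qL (p * τ) / p - qL (p * s) / p := by
  have hp0 : 0 < p := by linarith
  have hd : ∀ x, HasDerivAt (fun x => qL (p * x) / p - qL x) (Real.tanh (p * x) - Real.tanh x) x :=
    fun x => (q_hasDerivAt_comp_mul hp0 (q_hasDerivAt_L _)).sub (q_hasDerivAt_L x)
  have : MonotoneOn (fun x => qL (p * x) / p - qL x) (Set.Ici 0) := by
    apply monotoneOn_of_deriv_nonneg (convex_Ici 0)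
    · exact fun x _ => (hd x).continuousAt.continuousWithinAt
    · exact fun x _ => (hd x).differentiableAt.differentiableWithinAt
    · intro x hx
      rw [interior_Ici] at hx
      have hx : 0 < x := hx
      rw [(hd x).deriv, sub_nonneg]
      apply q_tanh_strictMono.monotone
      nlinarith
  have := this (Set.mem_Ici.2 hs) (Set.mem_Ici.2 (hs.trans h)) h
  simp only at this
  linarith

/-! ### Case III -/
theorem q_caseIII {p κ s t : ℝ} (hp : 1 < p) (hκ : 0 < κ) (hts : t < s)
    (h : qWc p κ s = qWc p κ t) : qDJ p κ t < qDJ p κ s := by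
  have hp0 : 0 < p := by linarith
  have hr : 0 < p - 1 := by linarith
  have htm : (p - 1) * t < κ := by
    by_contra hc
    push Not at hc
    linarith [q_Wc_anti hp hts hc]
  have hsm : κ < (p - 1) * s := by
    by_contra hc
    push Not at hc
    linarith [q_Wc_mono hp hts hc]
  have hs0 : 0 < s := by
    by_contra h0; push Not at h0; nlinarith
  rcases le_or_gt (-κ) ((p + 1) * t) with hcase | hcase
  · have em : (p - 1) * (κ / (p - 1)) = κ := by field_simp
    have hm0 : 0 < κ / (p - 1) := by positivity
    have htm' : t < κ / (p - 1) := by rw [lt_div_iff₀ hr]; linarith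
    have hsm' : κ / (p - 1) < s := by rw [div_lt_iff₀ hr]; linarith
    have := (q_PsiA hp hcase htm' em.le le_rfl).trans_le
          (q_PsiB hp (by linarith) em.ge hsm'.le le_rfl)
    rw [h] at this
    linarith
  · have ht0 : t < 0 := by
      by_contra h0; push Not at h0; nlinarith
    have hpt : |p * t| = -(p * t) := abs_of_neg (by nlinarith)
    have hps : |p * s| = p * s := abs_of_pos (by positivity)
    have h24 : |t + κ| ≤ |p * t| := by
      rw [hpt, abs_le]
      constructor <;> nlinarith
    have h1y : |s + κ| = s + κ := abs_of_pos (by linarith)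
    have h12 : |t + κ| < |s + κ| := by
      rw [h1y]
      by_contra hc
      push Not at hc
      have h5 : s + κ ≤ -(t + κ) := by
        rcases abs_cases (t + κ) with ⟨e, _⟩ | ⟨e, _⟩ <;> linarith
      have e1 := q_ell_mono hp hs0.le (show s ≤ -t by linarith)
      have e2 : qL (t + κ) < qL t := q_L_lt (by
        rw [abs_of_neg ht0, abs_of_nonpos (by linarith)]; linarith)
      have e3 : qL s < qL (s + κ) := q_L_lt (by rw [h1y, abs_of_pos hs0]; linarith)
      rw [show p * -t = -(p * t) by ring, q_L_even, q_L_even] at e1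
      unfold qWc at h
      linarith
    have hL12 := q_L_lt h12
    have hL : qL (p * s) / p - qL (p * t) / p = qL (s + κ) - qL (t + κ) := by
      unfold qWc at h; linarith
    have hy : 0 < s + κ := by linarith
    set c := (s + κ) * (1 - Real.tanh (s + κ) ^ 2) / Real.tanh (s + κ) with hc
    have K12 := q_K_mono h12 h1y.le
    rw [← hc] at K12
    have K31 := q_K_anti hy (a := s + κ) (b := p * s) (by rw [h1y, hps]; linarith) h1y.ge
    rw [← hc] at K31
    suffices hK : (qJ (p * s) - c * qL (p * s)) / p - (qJ (p * t) - c * qL (p * t)) / p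
        < (qJ (s + κ) - c * qL (s + κ)) - (qJ (t + κ) - c * qL (t + κ)) by
      have e1 : (qJ (p * s) - c * qL (p * s)) / p - (qJ (p * t) - c * qL (p * t)) / p
        = qJ (p * s) / p - qJ (p * t) / p - c * (qL (p * s) / p - qL (p * t) / p) := by ring
      rw [e1, hL] at hK
      unfold qDJ
      linarith
    rw [← sub_div]
    rcases le_or_gt |p * t| (s + κ) with hd | hd
    · have K24 : qJ (t + κ) - c * qL (t + κ) ≤ qJ (p * t) - c * qL (p * t) := by
        rcases h24.lt_or_eq with h24 | h24
        · have := q_K_mono h24 hd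
          rw [← hc] at this; exact this.le
        · rw [← q_J_abs (t + κ), ← q_L_abs (t + κ), h24, q_J_abs, q_L_abs]
      rw [div_lt_iff₀ hp0]
      nlinarith
    · have hst' : |p * t| ≤ |p * s| := by
        by_contra hcon
        push Not at hcon
        have := q_L_lt hcon
        have := div_lt_div_of_pos_right this hp0
        linarith
      have K34 := q_K_anti hy hst' hd.le
      rw [← hc] at K34
      have : (qJ (p * s) - c * qL (p * s) - (qJ (p * t) - c * qL (p * t))) / p ≤ 0 :=
        div_nonpos_of_nonpos_of_nonneg (by linarith) hp0.le
      linarith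

/-! ### The flow -/
theorem q_flow_ge {φ φ' : ℝ → ℝ} (hd : ∀ x, 0 < x → HasDerivAt φ (φ' x) x) (h1 : φ 1 = 0)
    (hz : ∀ x, 0 < x → φ x = 0 → 0 < φ' x) {r : ℝ} (hr : 1 ≤ r) : 0 ≤ φ r := by
  have := image_le_of_deriv_right_lt_deriv_boundary' (f := fun _ => (0 : ℝ)) (f' := fun _ => 0)
    (a := 1) (b := r) (B := φ) (B' := φ') continuousOn_const
    (fun x _ => hasDerivWithinAt_const _ _ _) h1.ge
    (fun x hx => (hd x (by linarith [hx.1])).continuousAt.continuousWithinAt)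
    (fun x hx => (hd x (by linarith [hx.1])).hasDerivWithinAt)
    (fun x hx he => hz x (by linarith [hx.1]) he.symm)
  exact this ⟨hr, le_rfl⟩

theorem q_flow_le {φ φ' : ℝ → ℝ} (hd : ∀ x, 0 < x → HasDerivAt φ (φ' x) x) (h1 : φ 1 = 0)
    (hz : ∀ x, 0 < x → φ x = 0 → 0 < φ' x) {r : ℝ} (hr0 : 0 < r) (hr : r ≤ 1) : φ r ≤ 0 := by
  have hd' : ∀ x, x < 0 → HasDerivAt (fun x => -φ (-x)) (φ' (-x)) x := by
    intro x hx
    have hh : HasDerivAt φ (φ' (-x)) (-x) := hd (-x) (by linarith)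
    have := (hh.comp x (hasDerivAt_neg x)).neg
    refine this.congr_deriv (by ring)
  have := image_le_of_deriv_right_lt_deriv_boundary' (f := fun _ => (0 : ℝ)) (f' := fun _ => 0)
    (a := -1) (b := -r) (B := fun x => -φ (-x)) (B' := fun x => φ' (-x)) continuousOn_const
    (fun x _ => hasDerivWithinAt_const _ _ _) (by simp [h1])
    (fun x hx => (hd' x (by linarith [hx.2])).continuousAt.continuousWithinAt)
    (fun x hx => (hd' x (by linarith [hx.2])).hasDerivWithinAt)
    (fun x hx he => hz (-x) (by linarith [hx.2]) (by linarith))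
  have := this (x := -r) ⟨by linarith, le_rfl⟩
  simp at this
  exact this

/-- scaling derivative -/
theorem q_hasDerivAt_scale {f : ℝ → ℝ} {f' a x : ℝ} (h : HasDerivAt f f' (x * a)) :
    HasDerivAt (fun x => f (x * a)) (a * f') x := by
  have h1 : HasDerivAt (fun x : ℝ => x * a) a x := by
    simpa using (hasDerivAt_id x).mul_const a
  exact (h.comp x h1).congr_deriv (by ring)

/-- Statement of the flow conclusion. -/
def qConcl (f : ℝ → ℝ) : Prop := (∀ r, 1 ≤ r → 0 ≤ f r) ∧ (∀ r, 0 < r → r ≤ 1 → f r ≤ 0)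

theorem q_concl {φ φ' : ℝ → ℝ} (hd : ∀ x, 0 < x → HasDerivAt φ (φ' x) x) (h1 : φ 1 = 0)
    (hz : ∀ x, 0 < x → φ x = 0 → 0 < φ' x) : qConcl φ :=
  ⟨fun _ hr => q_flow_ge hd h1 hz hr, fun _ h0 hr => q_flow_le hd h1 hz h0 hr⟩

theorem q_xtanh (x : ℝ) : x * Real.tanh x = qJ x + qL x := by unfold qJ; ring
theorem q_xcoth (x : ℝ) : x * (Real.cosh x / Real.sinh x) = qP x + Real.log (Real.sinh x) := by
  unfold qP; ring

theorem q_flowIII {p κ s t : ℝ} (hp : 1 < p) (hκ : 0 < κ) (hts : t < s)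
    (h : qWc p κ s = qWc p κ t) :
    qConcl (fun x => (qL (x * (s + κ)) - qL (x * (p * s)) / p)
      - (qL (x * (t + κ)) - qL (x * (p * t)) / p)) := by
  have hp0 : 0 < p := by linarith
  refine q_concl (φ' := fun x => ((s + κ) * Real.tanh (x * (s + κ)) -
    (p * s) * Real.tanh (x * (p * s)) / p) - ((t + κ) * Real.tanh (x * (t + κ)) -
    (p * t) * Real.tanh (x * (p * t)) / p)) ?_ ?_ ?_
  · intro x hx
    have hL : ∀ a, HasDerivAt (fun x => qL (x * a)) (a * Real.tanh (x * a)) x := fun a =>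
      q_hasDerivAt_scale (q_hasDerivAt_L _)
    exact ((hL _).sub ((hL _).div_const p)).sub ((hL _).sub ((hL _).div_const p))
  · unfold qWc at h
    simp only [one_mul]; linarith
  · intro x hx h0
    have e : ∀ a, x * a * Real.tanh (x * a) = qJ (x * a) + qL (x * a) := fun a => q_xtanh _
    have key := q_caseIII (κ := x * κ) (s := x * s) (t := x * t) hp (by positivity)
      (mul_lt_mul_of_pos_left hts hx) (by
        unfold qWc
        rw [show x * s + x * κ = x * (s + κ) by ring, show x * t + x * κ = x * (t + κ) by ring,
          show p * (x * s) = x * (p * s) by ring, show p * (x * t) = x * (p * t) by ring]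
        linarith)
    unfold qDJ at key
    rw [show x * s + x * κ = x * (s + κ) by ring, show x * t + x * κ = x * (t + κ) by ring,
          show p * (x * s) = x * (p * s) by ring, show p * (x * t) = x * (p * t) by ring] at key
    apply pos_of_mul_pos_right (a := x) _ hx.le
    have e1 := e (s + κ)
    have e2 := e (p * s)
    have e3 := e (t + κ)
    have e4 := e (p * t)
    have : x * (((s + κ) * Real.tanh (x * (s + κ)) -
      (p * s) * Real.tanh (x * (p * s)) / p) - ((t + κ) * Real.tanh (x * (t + κ)) -
      (p * t) * Real.tanh (x * (p * t)) / p)) =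
      (x * (s + κ) * Real.tanh (x * (s + κ)) - (x * (p * s) * Real.tanh (x * (p * s))) / p)
      - (x * (t + κ) * Real.tanh (x * (t + κ)) - (x * (p * t) * Real.tanh (x * (p * t))) / p) := by
      ring
    rw [this, e1, e2, e3, e4, add_div, add_div]
    linarith

theorem q_flowI {p κ s t : ℝ} (hp : 1 < p) (hκ : 0 < κ) (hs : 0 < s + κ)
    (h : qWs p κ s = qWc p κ t) :
    qConcl (fun x => (Real.log (Real.sinh (x * (s + κ))) - qL (x * (p * s)) / p)
      - (qL (x * (t + κ)) - qL (x * (p * t)) / p)) := by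
  have hp0 : 0 < p := by linarith
  refine q_concl (φ' := fun x => ((s + κ) * (Real.cosh (x * (s + κ)) / Real.sinh (x * (s + κ))) -
    (p * s) * Real.tanh (x * (p * s)) / p) - ((t + κ) * Real.tanh (x * (t + κ)) -
    (p * t) * Real.tanh (x * (p * t)) / p)) ?_ ?_ ?_
  · intro x hx
    have hL : ∀ a, HasDerivAt (fun x => qL (x * a)) (a * Real.tanh (x * a)) x := fun a =>
      q_hasDerivAt_scale (q_hasDerivAt_L _)
    have hS := q_hasDerivAt_scale (a := s + κ) (x := x)
      (q_hasDerivAt_logsinh (Real.sinh_pos_iff.2 (mul_pos hx hs)).ne')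
    exact (hS.sub ((hL _).div_const p)).sub ((hL _).sub ((hL _).div_const p))
  · unfold qWc qWs at h
    simp only [one_mul]; linarith
  · intro x hx h0
    have e : ∀ a, x * a * Real.tanh (x * a) = qJ (x * a) + qL (x * a) := fun a => q_xtanh _
    have key := q_caseI (κ := x * κ) (s := x * s) (t := x * t) hp (by positivity)
      (by rw [← mul_add]; positivity) (by
        unfold qWc qWs
        rw [show x * s + x * κ = x * (s + κ) by ring, show x * t + x * κ = x * (t + κ) by ring,
          show p * (x * s) = x * (p * s) by ring, show p * (x * t) = x * (p * t) by ring]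
        linarith)
    unfold qDJ at key
    rw [show x * s + x * κ = x * (s + κ) by ring, show x * t + x * κ = x * (t + κ) by ring,
          show p * (x * s) = x * (p * s) by ring, show p * (x * t) = x * (p * t) by ring] at key
    apply pos_of_mul_pos_right (a := x) _ hx.le
    have e1 := q_xcoth (x * (s + κ))
    have e2 := e (p * s)
    have e3 := e (t + κ)
    have e4 := e (p * t)
    have : x * (((s + κ) * (Real.cosh (x * (s + κ)) / Real.sinh (x * (s + κ))) -
      (p * s) * Real.tanh (x * (p * s)) / p) - ((t + κ) * Real.tanh (x * (t + κ)) -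
      (p * t) * Real.tanh (x * (p * t)) / p)) =
      (x * (s + κ) * (Real.cosh (x * (s + κ)) / Real.sinh (x * (s + κ)))
        - (x * (p * s) * Real.tanh (x * (p * s))) / p)
      - (x * (t + κ) * Real.tanh (x * (t + κ)) - (x * (p * t) * Real.tanh (x * (p * t))) / p) := by
      ring
    rw [this, e1, e2, e3, e4, add_div, add_div]
    linarith

theorem q_flowII {p κ s τ : ℝ} (hp : 1 < p) (hκ : 0 < κ) (hs : 0 < s + κ) (hτ : 0 < τ - κ)
    (h : qWs p κ s = Real.log (Real.sinh (τ - κ)) - qL (p * τ) / p) :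
    qConcl (fun x => (Real.log (Real.sinh (x * (s + κ))) - qL (x * (p * s)) / p)
      - (Real.log (Real.sinh (x * (τ - κ))) - qL (x * (p * τ)) / p)) := by
  have hp0 : 0 < p := by linarith
  refine q_concl (φ' := fun x => ((s + κ) * (Real.cosh (x * (s + κ)) / Real.sinh (x * (s + κ))) -
    (p * s) * Real.tanh (x * (p * s)) / p) -
    ((τ - κ) * (Real.cosh (x * (τ - κ)) / Real.sinh (x * (τ - κ))) -
    (p * τ) * Real.tanh (x * (p * τ)) / p)) ?_ ?_ ?_
  · intro x hx
    have hL : ∀ a, HasDerivAt (fun x => qL (x * a)) (a * Real.tanh (x * a)) x := fun a =>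
      q_hasDerivAt_scale (q_hasDerivAt_L _)
    have hS : ∀ a : ℝ, 0 < a → _ := fun a ha => q_hasDerivAt_scale (a := a) (x := x)
      (q_hasDerivAt_logsinh (Real.sinh_pos_iff.2 (mul_pos hx ha)).ne')
    exact ((hS _ hs).sub ((hL _).div_const p)).sub ((hS _ hτ).sub ((hL _).div_const p))
  · unfold qWs at h
    simp only [one_mul]; linarith
  · intro x hx h0
    have e : ∀ a, x * a * Real.tanh (x * a) = qJ (x * a) + qL (x * a) := fun a => q_xtanh _
    have key := q_caseII (κ := x * κ) (s := x * s) (τ := x * τ) hp (by positivity)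
      (by rw [← mul_add]; positivity) (by rw [← mul_sub]; positivity) (by
        unfold qWs
        rw [show x * s + x * κ = x * (s + κ) by ring, show x * τ - x * κ = x * (τ - κ) by ring,
          show p * (x * s) = x * (p * s) by ring, show p * (x * τ) = x * (p * τ) by ring]
        linarith)
    rw [show x * s + x * κ = x * (s + κ) by ring, show x * τ - x * κ = x * (τ - κ) by ring,
          show p * (x * s) = x * (p * s) by ring, show p * (x * τ) = x * (p * τ) by ring] at key
    apply pos_of_mul_pos_right (a := x) _ hx.le
    have e1 := q_xcoth (x * (s + κ))
    have e2 := e (p * s)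
    have e3 := q_xcoth (x * (τ - κ))
    have e4 := e (p * τ)
    have : x * (((s + κ) * (Real.cosh (x * (s + κ)) / Real.sinh (x * (s + κ))) -
      (p * s) * Real.tanh (x * (p * s)) / p) -
      ((τ - κ) * (Real.cosh (x * (τ - κ)) / Real.sinh (x * (τ - κ))) -
      (p * τ) * Real.tanh (x * (p * τ)) / p)) =
      (x * (s + κ) * (Real.cosh (x * (s + κ)) / Real.sinh (x * (s + κ)))
        - (x * (p * s) * Real.tanh (x * (p * s))) / p)
      - (x * (τ - κ) * (Real.cosh (x * (τ - κ)) / Real.sinh (x * (τ - κ)))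
        - (x * (p * τ) * Real.tanh (x * (p * τ))) / p) := by
      ring
    rw [this, e1, e2, e3, e4, add_div, add_div]
    linarith


/-- signed power -/
noncomputable def sg (p x : ℝ) : ℝ := |x| ^ (p - 2) * x

theorem sg_pos {p x : ℝ} (hx : 0 < x) : sg p x = x ^ (p - 1) := by
  unfold sg
  rw [abs_of_pos hx, show p - 1 = (p - 2) + 1 by ring, Real.rpow_add_one hx.ne']

theorem sg_odd (p x : ℝ) : sg p (-x) = - sg p x := by
  unfold sg; rw [abs_neg]; ring

theorem q_Fden (p m s x : ℝ) (hp : 0 < p) :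
    (Real.exp (m + s) ^ (p * x) + Real.exp (m - s) ^ (p * x)) ^ (1 / p)
      = Real.exp (x * m + Real.log 2 / p + qL (x * (p * s)) / p) := by
  have h : Real.exp (m + s) ^ (p * x) + Real.exp (m - s) ^ (p * x)
      = Real.exp (p * x * m + Real.log 2 + qL (x * (p * s))) := by
    rw [← Real.exp_mul, ← Real.exp_mul, Real.exp_add, Real.exp_add, Real.exp_log two_pos, qL,
      Real.exp_log (Real.cosh_pos _), Real.cosh_eq,
      show (m + s) * (p * x) = p * x * m + x * (p * s) by ring,
      show (m - s) * (p * x) = p * x * m + -(x * (p * s)) by ring, Real.exp_add, Real.exp_add]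
    ring
  rw [h, ← Real.exp_mul]
  congr 1
  field_simp

theorem q_Fplus (p m s d κ x : ℝ) (hp : 0 < p) :
    (Real.exp (m + s) ^ x * Real.exp (d + κ) ^ x + Real.exp (m - s) ^ x * Real.exp (d - κ) ^ x) /
      (Real.exp (m + s) ^ (p * x) + Real.exp (m - s) ^ (p * x)) ^ (1 / p)
      = Real.exp (x * d + (Real.log 2 - Real.log 2 / p)
        + (qL (x * (s + κ)) - qL (x * (p * s)) / p)) := by
  rw [q_Fden _ _ _ _ hp]
  have h : Real.exp (m + s) ^ x * Real.exp (d + κ) ^ x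
      + Real.exp (m - s) ^ x * Real.exp (d - κ) ^ x
      = Real.exp (x * (m + d) + Real.log 2 + qL (x * (s + κ))) := by
    rw [Real.exp_add _ (qL _), Real.exp_add _ (Real.log 2), Real.exp_log two_pos, qL,
      Real.exp_log (Real.cosh_pos _), Real.cosh_eq]
    simp only [← Real.exp_mul, ← Real.exp_add]
    rw [show (m + s) * x + (d + κ) * x = x * (m + d) + x * (s + κ) by ring,
      show (m - s) * x + (d - κ) * x = x * (m + d) + -(x * (s + κ)) by ring, Real.exp_add,
      Real.exp_add]
    ring
  rw [h, ← Real.exp_sub]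
  congr 1
  ring

theorem q_Fminus (p m s d κ x : ℝ) (hp : 0 < p) (hx : 0 < x) (hs : 0 < s + κ) :
    (Real.exp (m + s) ^ x * Real.exp (d + κ) ^ x - Real.exp (m - s) ^ x * Real.exp (d - κ) ^ x) /
      (Real.exp (m + s) ^ (p * x) + Real.exp (m - s) ^ (p * x)) ^ (1 / p)
      = Real.exp (x * d + (Real.log 2 - Real.log 2 / p)
        + (Real.log (Real.sinh (x * (s + κ))) - qL (x * (p * s)) / p)) := by
  rw [q_Fden _ _ _ _ hp]
  have h : Real.exp (m + s) ^ x * Real.exp (d + κ) ^ x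
      - Real.exp (m - s) ^ x * Real.exp (d - κ) ^ x
      = Real.exp (x * (m + d) + Real.log 2 + Real.log (Real.sinh (x * (s + κ)))) := by
    rw [Real.exp_add _ (Real.log _), Real.exp_add _ (Real.log 2), Real.exp_log two_pos,
      Real.exp_log (Real.sinh_pos_iff.2 (mul_pos hx hs)), Real.sinh_eq]
    simp only [← Real.exp_mul, ← Real.exp_add]
    rw [show (m + s) * x + (d + κ) * x = x * (m + d) + x * (s + κ) by ring,
      show (m - s) * x + (d - κ) * x = x * (m + d) + -(x * (s + κ)) by ring, Real.exp_add,
      Real.exp_add]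
    ring
  rw [h, ← Real.exp_sub]
  congr 1
  ring

theorem q_param {X Y : ℝ} (hX : 0 < X) (hY : 0 < Y) :
    ∃ m s, X = Real.exp (m + s) ∧ Y = Real.exp (m - s) := by
  refine ⟨(Real.log X + Real.log Y) / 2, (Real.log X - Real.log Y) / 2, ?_, ?_⟩
  · rw [show (Real.log X + Real.log Y) / 2 + (Real.log X - Real.log Y) / 2 = Real.log X by ring,
      Real.exp_log hX]
  · rw [show (Real.log X + Real.log Y) / 2 - (Real.log X - Real.log Y) / 2 = Real.log Y by ring,
      Real.exp_log hY]

theorem q_finish {p : ℝ} (hp : 1 < p) {d C : ℝ} {f g : ℝ → ℝ} {A B : ℝ}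
    (h : qConcl (fun x => f x - g x)) (hA : A = Real.exp ((p - 1) * d + C + f (p - 1)))
    (hB : B = Real.exp ((p - 1) * d + C + g (p - 1))) : (2 ≤ p → B ≤ A) ∧ (p ≤ 2 → A ≤ B) := by
  subst hA hB
  constructor
  · intro h2
    have := h.1 (p - 1) (by linarith)
    exact Real.exp_le_exp.2 (by linarith)
  · intro h2
    have := h.2 (p - 1) (by linarith) (by linarith)
    exact Real.exp_le_exp.2 (by linarith)

/-- The key monotonicity theorem. -/
theorem q_key {p x1 y1 x2 y2 : ℝ} (hp : 1 < p) (h1 : |x1| ^ p + |y1| ^ p = 1)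
    (h2 : |x2| ^ p + |y2| ^ p = 1) (hx1 : 0 < x1) (hy2 : y2 < 0) (hy1 : y1 ≠ 0) (hx2 : x2 ≠ 0)
    (ha : 0 < x1 - x2) (hab : x1 - x2 < y1 - y2) (hdet : 0 < x2 * y1 - y2 * x1) :
    (2 ≤ p → (sg p x2 * (y1 - y2) ^ (p - 1) - sg p y2 * (x1 - x2) ^ (p - 1)) /
        (|x2| ^ (p * (p - 1)) + |y2| ^ (p * (p - 1))) ^ (1 / p)
      ≤ (sg p x1 * (y1 - y2) ^ (p - 1) - sg p y1 * (x1 - x2) ^ (p - 1)) /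
        (|x1| ^ (p * (p - 1)) + |y1| ^ (p * (p - 1))) ^ (1 / p)) ∧
    (p ≤ 2 → (sg p x1 * (y1 - y2) ^ (p - 1) - sg p y1 * (x1 - x2) ^ (p - 1)) /
        (|x1| ^ (p * (p - 1)) + |y1| ^ (p * (p - 1))) ^ (1 / p)
      ≤ (sg p x2 * (y1 - y2) ^ (p - 1) - sg p y2 * (x1 - x2) ^ (p - 1)) /
        (|x2| ^ (p * (p - 1)) + |y2| ^ (p * (p - 1))) ^ (1 / p)) := by
  have hp0 : 0 < p := by linarith
  have hr : 0 < p - 1 := by linarith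
  have hb : 0 < y1 - y2 := by linarith
  have d1 : x1 * (y1 - y2) - y1 * (x1 - x2) = x2 * y1 - y2 * x1 := by ring
  have d2 : x2 * (y1 - y2) - y2 * (x1 - x2) = x2 * y1 - y2 * x1 := by ring
  generalize hD : x2 * y1 - y2 * x1 = D at *
  obtain ⟨d, κ, hdb, hda⟩ := q_param hb ha
  have hκ : 0 < κ := by
    rw [hdb, hda, Real.exp_lt_exp] at hab; linarith
  obtain ⟨m1, s, hX1, hY1⟩ := q_param hx1 (abs_pos.2 hy1)
  obtain ⟨m2, t, hX2, hY2⟩ := q_param (abs_pos.2 hx2) (show 0 < -y2 by linarith)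
  have hsx1 : sg p x1 = x1 ^ (p - 1) := sg_pos hx1
  have hsy2 : sg p y2 = - (-y2) ^ (p - 1) := by
    rw [← sg_pos (show 0 < -y2 by linarith), sg_odd]; ring
  have ax1 : |x1| = x1 := abs_of_pos hx1
  have ay2 : |y2| = -y2 := abs_of_neg hy2
  have den1 : (x1 ^ (p * 1) + |y1| ^ (p * 1)) ^ (1 / p) = 1 := by
    rw [← ax1, mul_one, h1, Real.one_rpow]
  have den2 : (|x2| ^ (p * 1) + (-y2) ^ (p * 1)) ^ (1 / p) = 1 := by
    rw [← ay2, mul_one, h2, Real.one_rpow]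
  rcases lt_or_gt_of_ne hy1 with hy1n | hy1p
  · have ay1 : |y1| = -y1 := abs_of_neg hy1n
    have hsy1 : sg p y1 = - |y1| ^ (p - 1) := by
      rw [ay1, ← sg_pos (show 0 < -y1 by linarith), sg_odd]; ring
    rcases lt_or_gt_of_ne hx2 with hx2n | hx2p
    · exfalso
      have hx1' : x1 ≤ 1 := by
        by_contra hc
        push Not at hc
        have := Real.one_lt_rpow hc hp0
        have := Real.rpow_nonneg (abs_nonneg y1) p
        rw [ax1] at h1
        linarith
      have hy1' : |y1| ≤ 1 := by
        by_contra hc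
        push Not at hc
        have := Real.one_lt_rpow hc hp0
        have := Real.rpow_nonneg (abs_nonneg x1) p
        linarith
      have hy2' : |y2| ≤ 1 := by
        by_contra hc
        push Not at hc
        have := Real.one_lt_rpow hc hp0
        have := Real.rpow_nonneg (abs_nonneg x2) p
        linarith
      have e1 : |x1| ^ p ≤ x1 := by
        rw [ax1]
        simpa using Real.rpow_le_rpow_of_exponent_ge hx1 hx1' hp.le
      have e2 : |y1| ^ p ≤ |y1| := by
        simpa using Real.rpow_le_rpow_of_exponent_ge (abs_pos.2 hy1) hy1' hp.le
      rw [ay1] at e2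
      rw [ay1] at h1
      rw [ay2] at hy2'
      linarith
    · have ax2 : |x2| = x2 := abs_of_pos hx2p
      have hsx2 : sg p x2 = |x2| ^ (p - 1) := by rw [ax2]; exact sg_pos hx2p
      have hts : t < s := by
        have e1 : |x2| < x1 := by rw [ax2]; linarith
        have e2 : |y1| < -y2 := by rw [ay1]; linarith
        rw [hX1, hX2, Real.exp_lt_exp] at e1
        rw [hY1, hY2, Real.exp_lt_exp] at e2
        linarith
      have FA := fun x => q_Fplus p m1 s d κ x hp0
      have FB := fun x => q_Fplus p m2 t d κ x hp0
      simp only [← hX1, ← hY1, ← hX2, ← hY2, ← hda, ← hdb] at FA FB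
      have hW : qWc p κ s = qWc p κ t := by
        have e1 := FA 1
        have e2 := FB 1
        rw [den1] at e1
        rw [den2] at e2
        have : Real.exp (1 * d + (Real.log 2 - Real.log 2 / p) +
          (qL (1 * (s + κ)) - qL (1 * (p * s)) / p)) = Real.exp (1 * d +
          (Real.log 2 - Real.log 2 / p) + (qL (1 * (t + κ)) - qL (1 * (p * t)) / p)) := by
          rw [← e1, ← e2, ax2, ay1]
          simp only [Real.rpow_one, div_one]
          linarith
        have := Real.exp_injective this
        simp only [one_mul] at this
        unfold qWc; linarith
      refine q_finish hp (q_flowIII hp hκ hts hW) (d := d) (C := Real.log 2 - Real.log 2 / p) ?_ ?_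
      · rw [← FA (p - 1), hsx1, hsy1, ax1]
        congr 1; ring
      · rw [← FB (p - 1), hsx2, hsy2, ay2]
        congr 1; ring
  · have ay1 : |y1| = y1 := abs_of_pos hy1p
    have hsy1 : sg p y1 = |y1| ^ (p - 1) := by rw [ay1]; exact sg_pos hy1p
    have hs : 0 < s + κ := by
      have e1 : |y1| * (x1 - x2) < x1 * (y1 - y2) := by rw [ay1]; linarith
      rw [hda, hdb, hX1, hY1, ← Real.exp_add, ← Real.exp_add, Real.exp_lt_exp] at e1
      linarith
    have FA := fun x hx => q_Fminus p m1 s d κ x hp0 hx hs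
    simp only [← hX1, ← hY1, ← hda, ← hdb] at FA
    have EA := FA 1 one_pos
    rw [den1] at EA
    rcases lt_or_gt_of_ne hx2 with hx2n | hx2p
    · have ax2 : |x2| = -x2 := abs_of_neg hx2n
      have hsx2 : sg p x2 = - |x2| ^ (p - 1) := by
        rw [ax2, ← sg_pos (show 0 < -x2 by linarith), sg_odd]; ring
      have hτ : 0 < (-t) + (-κ) := by
        have e1 : |x2| * (y1 - y2) < (-y2) * (x1 - x2) := by rw [ax2]; linarith
        rw [hda, hdb, hX2, hY2, ← Real.exp_add, ← Real.exp_add, Real.exp_lt_exp] at e1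
        linarith
      have FB := fun x hx => q_Fminus p m2 (-t) d (-κ) x hp0 hx hτ
      simp only [← sub_eq_add_neg, sub_neg_eq_add] at FB
      simp only [← hX2, ← hY2, ← hda, ← hdb] at FB
      have EB := FB 1 one_pos
      rw [add_comm (((-y2)) ^ (p * 1)), den2] at EB
      have hW : qWs p κ s = Real.log (Real.sinh (-t - κ)) - qL (p * (-t)) / p := by
        have : Real.exp (1 * d + (Real.log 2 - Real.log 2 / p) +
          (Real.log (Real.sinh (1 * (s + κ))) - qL (1 * (p * s)) / p)) = Real.exp (1 * d +
          (Real.log 2 - Real.log 2 / p) +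
          (Real.log (Real.sinh (1 * (-t - κ))) - qL (1 * (p * (-t))) / p)) := by
          rw [← EA, ← EB, ax2, ay1]
          simp only [Real.rpow_one, div_one]
          linarith
        have := Real.exp_injective this
        simp only [one_mul] at this
        unfold qWs; linarith
      refine q_finish hp (q_flowII hp hκ hs (by linarith) hW) (d := d)
        (C := Real.log 2 - Real.log 2 / p) ?_ ?_
      · rw [← FA (p - 1) hr, hsx1, hsy1, ax1]
      · rw [← FB (p - 1) hr, hsx2, hsy2, ay2]
        congr 1
        · ring
        · rw [add_comm]
    · have ax2 : |x2| = x2 := abs_of_pos hx2p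
      have hsx2 : sg p x2 = |x2| ^ (p - 1) := by rw [ax2]; exact sg_pos hx2p
      have FB := fun x => q_Fplus p m2 t d κ x hp0
      simp only [← hX2, ← hY2, ← hda, ← hdb] at FB
      have EB := FB 1
      rw [den2] at EB
      have hW : qWs p κ s = qWc p κ t := by
        have : Real.exp (1 * d + (Real.log 2 - Real.log 2 / p) +
          (Real.log (Real.sinh (1 * (s + κ))) - qL (1 * (p * s)) / p)) = Real.exp (1 * d +
          (Real.log 2 - Real.log 2 / p) + (qL (1 * (t + κ)) - qL (1 * (p * t)) / p)) := by
          rw [← EA, ← EB, ax2, ay1]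
          simp only [Real.rpow_one, div_one]
          linarith
        have := Real.exp_injective this
        simp only [one_mul] at this
        unfold qWs qWc; linarith
      refine q_finish hp (q_flowI hp hκ hs hW) (d := d) (C := Real.log 2 - Real.log 2 / p) ?_ ?_
      · rw [← FA (p - 1) hr, hsx1, hsy1, ax1]
      · rw [← FB (p - 1), hsx2, hsy2, ay2]
        congr 1; ring


theorem sg_mul_self {p : ℝ} (hp : 1 < p) (x : ℝ) : sg p x * x = |x| ^ p := by
  rcases eq_or_ne x 0 with h | h
  · subst h; simp [sg, Real.zero_rpow (show p ≠ 0 by linarith)]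
  · have := abs_pos.2 h
    unfold sg
    rw [mul_assoc, ← abs_mul_abs_self x, ← mul_assoc, ← Real.rpow_add_one this.ne',
      ← Real.rpow_add_one this.ne']
    congr 1; ring

theorem abs_sg {p : ℝ} (hp : 1 < p) (x : ℝ) : |sg p x| = |x| ^ (p - 1) := by
  rcases eq_or_ne x 0 with h | h
  · subst h; simp [sg, Real.zero_rpow (show p - 1 ≠ 0 by linarith)]
  · have := abs_pos.2 h
    unfold sg
    rw [abs_mul, abs_of_nonneg (Real.rpow_nonneg this.le _), ← Real.rpow_add_one this.ne']
    congr 1; ring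

theorem sg_mul {p c : ℝ} (hc : 0 < c) (x : ℝ) : sg p (c * x) = c ^ (p - 1) * sg p x := by
  unfold sg
  rw [abs_mul, abs_of_pos hc, Real.mul_rpow hc.le (abs_nonneg x),
    show p - 1 = (p - 2) + 1 by ring, Real.rpow_add_one hc.ne']
  ring

theorem sg_pos_iff {p x : ℝ} (hx : 0 < x) : 0 < sg p x := by
  rw [sg_pos hx]; exact Real.rpow_pos_of_pos hx _

theorem sg_add_pos {p x y : ℝ} (hp : 1 < p) (h : 0 < x + y) : 0 < sg p x + sg p y := by
  wlog hxy : y ≤ x generalizing x y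
  · have := this (x := y) (y := x) (by linarith) (by linarith)
    linarith
  have hx : 0 < x := by linarith
  have h1 := sg_pos_iff (p := p) hx
  rcases lt_trichotomy y 0 with hy | hy | hy
  · have e : sg p y = - (-y) ^ (p - 1) := by
      rw [← sg_pos (show 0 < -y by linarith), sg_odd]; ring
    rw [e, sg_pos hx]
    have := Real.rpow_lt_rpow (show 0 ≤ -y by linarith) (show -y < x by linarith)
      (show 0 < p - 1 by linarith)
    linarith
  · subst hy
    have : sg p 0 = 0 := by simp [sg]
    linarith
  · have := sg_pos_iff (p := p) hy
    linarith

theorem g_U_pos (p φ : ℝ) : 0 < |Real.sin φ| ^ p + |Real.cos φ| ^ p := by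
  rcases eq_or_ne (Real.cos φ) 0 with h | h
  · have : Real.sin φ ≠ 0 := by
      intro h'; have := Real.sin_sq_add_cos_sq φ; rw [h, h'] at this; norm_num at this
    have := Real.rpow_pos_of_pos (abs_pos.2 this) p
    have := Real.rpow_nonneg (abs_nonneg (Real.cos φ)) p
    linarith
  · have := Real.rpow_pos_of_pos (abs_pos.2 h) p
    have := Real.rpow_nonneg (abs_nonneg (Real.sin φ)) p
    linarith

theorem g_N_pos (p φ : ℝ) : 0 < Np p φ := Real.rpow_pos_of_pos (g_U_pos p φ) _

/-- first coordinate -/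
noncomputable def gX (p φ : ℝ) : ℝ := Real.cos φ / Np p φ
/-- second coordinate -/
noncomputable def gY (p φ : ℝ) : ℝ := Real.sin φ / Np p φ

theorem g_N_rpow {p : ℝ} (hp : 1 < p) (φ : ℝ) :
    Np p φ ^ p = |Real.sin φ| ^ p + |Real.cos φ| ^ p := by
  unfold Np
  rw [← Real.rpow_mul (g_U_pos p φ).le, one_div, inv_mul_cancel₀ (by linarith), Real.rpow_one]

theorem g_unit {p : ℝ} (hp : 1 < p) (φ : ℝ) : |gX p φ| ^ p + |gY p φ| ^ p = 1 := by
  have hN := g_N_pos p φ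
  unfold gX gY
  rw [abs_div, abs_div, abs_of_pos hN, Real.div_rpow (abs_nonneg _) hN.le,
    Real.div_rpow (abs_nonneg _) hN.le, ← add_div, g_N_rpow hp, add_comm,
    div_self (g_U_pos p φ).ne']

theorem g_R_pos (p φ : ℝ) : 0 < gX p φ ^ 2 + gY p φ ^ 2 := by
  have hN := g_N_pos p φ
  unfold gX gY
  rw [div_pow, div_pow, ← add_div]
  have := Real.sin_sq_add_cos_sq φ
  rw [show Real.cos φ ^ 2 + Real.sin φ ^ 2 = 1 by linarith]
  positivity

theorem g_hasDerivAt_N {p : ℝ} (hp : 1 < p) (φ : ℝ) :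
    HasDerivAt (Np p) (Np p φ * (sg p (gY p φ) * gX p φ - sg p (gX p φ) * gY p φ)) φ := by
  have hU := g_U_pos p φ
  have hN := g_N_pos p φ
  have h1 := (hasDerivAt_abs_rpow (Real.sin φ) hp).comp φ (Real.hasDerivAt_sin φ)
  have h2 := (hasDerivAt_abs_rpow (Real.cos φ) hp).comp φ (Real.hasDerivAt_cos φ)
  have h3 := (h1.add h2).rpow_const (p := 1 / p) (Or.inl hU.ne')
  refine HasDerivAt.congr_deriv (f := Np p) h3 ?_
  have es : Real.sin φ = Np p φ * gY p φ := by unfold gY; field_simp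
  have ec : Real.cos φ = Np p φ * gX p φ := by unfold gX; field_simp
  have e1 : p * |Real.sin φ| ^ (p - 2) * Real.sin φ = p * sg p (Real.sin φ) := by unfold sg; ring
  have e2 : p * |Real.cos φ| ^ (p - 2) * Real.cos φ = p * sg p (Real.cos φ) := by unfold sg; ring
  have e3 : (((fun x => |x| ^ p) ∘ Real.sin + (fun x => |x| ^ p) ∘ Real.cos) φ) ^ (1 / p - 1)
      * Np p φ ^ (p - 1) = 1 := by
    have : ((fun x : ℝ => |x| ^ p) ∘ Real.sin + (fun x => |x| ^ p) ∘ Real.cos) φ = Np p φ ^ p := by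
      rw [g_N_rpow hp]; rfl
    rw [this, ← Real.rpow_mul hN.le, ← Real.rpow_add hN]
    rw [show p * (1 / p - 1) + (p - 1) = 0 by field_simp; ring, Real.rpow_zero]
  rw [e1, e2]
  generalize (((fun x => |x| ^ p) ∘ Real.sin + (fun x => |x| ^ p) ∘ Real.cos) φ) ^ (1 / p - 1) = k
    at *
  rw [es, ec, sg_mul hN, sg_mul hN]
  have hp0 : p ≠ 0 := by linarith
  field_simp
  linear_combination ((sg p (gY p φ) * gX p φ - sg p (gX p φ) * gY p φ)) * e3

theorem g_hasDerivAt_X {p : ℝ} (hp : 1 < p) (φ : ℝ) :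
    HasDerivAt (gX p) (- sg p (gY p φ) * (gX p φ ^ 2 + gY p φ ^ 2)) φ := by
  have hN := g_N_pos p φ
  refine HasDerivAt.congr_deriv (f := gX p)
    ((Real.hasDerivAt_cos φ).div (g_hasDerivAt_N hp φ) hN.ne') ?_
  have es : Real.sin φ = Np p φ * gY p φ := by unfold gY; field_simp
  have ec : Real.cos φ = Np p φ * gX p φ := by unfold gX; field_simp
  have hu := g_unit hp φ
  rw [← sg_mul_self hp, ← sg_mul_self hp] at hu
  rw [es, ec]
  field_simp
  linear_combination (gY p φ) * hu

theorem g_hasDerivAt_Y {p : ℝ} (hp : 1 < p) (φ : ℝ) :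
    HasDerivAt (gY p) (sg p (gX p φ) * (gX p φ ^ 2 + gY p φ ^ 2)) φ := by
  have hN := g_N_pos p φ
  refine HasDerivAt.congr_deriv (f := gY p)
    ((Real.hasDerivAt_sin φ).div (g_hasDerivAt_N hp φ) hN.ne') ?_
  have es : Real.sin φ = Np p φ * gY p φ := by unfold gY; field_simp
  have ec : Real.cos φ = Np p φ * gX p φ := by unfold gX; field_simp
  have hu := g_unit hp φ
  rw [← sg_mul_self hp, ← sg_mul_self hp] at hu
  rw [es, ec]
  field_simp
  linear_combination (- gX p φ) * hu

/-- the speed factor -/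
noncomputable def gV (p φ : ℝ) : ℝ :=
  (|gX p φ| ^ (p * (p - 1)) + |gY p φ| ^ (p * (p - 1))) ^ (1 / p)

theorem g_Vbase_pos (p φ : ℝ) : 0 < |gX p φ| ^ (p * (p - 1)) + |gY p φ| ^ (p * (p - 1)) := by
  have hR := g_R_pos p φ
  rcases eq_or_ne (gX p φ) 0 with h | h
  · have : gY p φ ≠ 0 := by
      intro h'; rw [h, h'] at hR; norm_num at hR
    have := Real.rpow_pos_of_pos (abs_pos.2 this) (p * (p - 1))
    have := Real.rpow_nonneg (abs_nonneg (gX p φ)) (p * (p - 1))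
    linarith
  · have := Real.rpow_pos_of_pos (abs_pos.2 h) (p * (p - 1))
    have := Real.rpow_nonneg (abs_nonneg (gY p φ)) (p * (p - 1))
    linarith

theorem g_V_pos (p φ : ℝ) : 0 < gV p φ := Real.rpow_pos_of_pos (g_Vbase_pos p φ) _

theorem g_speed {p : ℝ} (hp : 1 < p) (φ : ℝ) :
    speed p φ = (gX p φ ^ 2 + gY p φ ^ 2) * gV p φ := by
  have hR := g_R_pos p φ
  have hp0 : 0 < p := by linarith
  have h : HasDerivAt (rho p) (- sg p (gY p φ) * (gX p φ ^ 2 + gY p φ ^ 2),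
      sg p (gX p φ) * (gX p φ ^ 2 + gY p φ ^ 2)) φ :=
    (g_hasDerivAt_X hp φ).prodMk (g_hasDerivAt_Y hp φ)
  unfold speed
  rw [h.deriv]
  unfold lpN
  simp only [abs_mul, abs_neg, abs_sg hp, abs_of_pos hR]
  rw [Real.mul_rpow (by positivity) hR.le, Real.mul_rpow (by positivity) hR.le, ← add_mul,
    Real.mul_rpow (by positivity) (by positivity), ← Real.rpow_mul hR.le,
    mul_one_div_cancel hp0.ne', Real.rpow_one, ← Real.rpow_mul (abs_nonneg _),
    ← Real.rpow_mul (abs_nonneg _), mul_comm]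
  congr 1
  unfold gV
  congr 1
  rw [mul_comm (p - 1) p]; ring

theorem g_contX {p : ℝ} (hp : 1 < p) : Continuous (gX p) :=
  continuous_iff_continuousAt.2 fun φ => (g_hasDerivAt_X hp φ).continuousAt
theorem g_contY {p : ℝ} (hp : 1 < p) : Continuous (gY p) :=
  continuous_iff_continuousAt.2 fun φ => (g_hasDerivAt_Y hp φ).continuousAt

theorem g_contV {p : ℝ} (hp : 1 < p) : Continuous (gV p) := by
  have h : 0 < p * (p - 1) := mul_pos (by linarith) (by linarith)
  unfold gV
  refine Continuous.rpow_const ?_ (fun φ => Or.inl (g_Vbase_pos p φ).ne')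
  exact ((g_contX hp).abs.rpow_const (fun _ => Or.inr h.le)).add
    ((g_contY hp).abs.rpow_const (fun _ => Or.inr h.le))

theorem g_cont_speed {p : ℝ} (hp : 1 < p) : Continuous (speed p) := by
  have : speed p = fun φ => (gX p φ ^ 2 + gY p φ ^ 2) * gV p φ := funext (g_speed hp)
  rw [this]
  exact (((g_contX hp).pow 2).add ((g_contY hp).pow 2)).mul (g_contV hp)

theorem g_speed_pos {p : ℝ} (hp : 1 < p) (φ : ℝ) : 0 < speed p φ := by
  rw [g_speed hp]; exact mul_pos (g_R_pos p φ) (g_V_pos p φ)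

/-! symmetries -/
theorem g_N_neg (p φ : ℝ) : Np p (-φ) = Np p φ := by simp [Np]
theorem g_X_neg (p φ : ℝ) : gX p (-φ) = gX p φ := by simp [gX, g_N_neg]
theorem g_Y_neg (p φ : ℝ) : gY p (-φ) = -gY p φ := by simp [gY, g_N_neg, neg_div]
theorem g_N_rot (p φ : ℝ) : Np p (φ + Real.pi / 2) = Np p φ := by
  simp [Np, Real.sin_add_pi_div_two, Real.cos_add_pi_div_two, add_comm]
theorem g_X_rot (p φ : ℝ) : gX p (φ + Real.pi / 2) = -gY p φ := by
  simp [gX, gY, g_N_rot, Real.cos_add_pi_div_two, neg_div]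
theorem g_Y_rot (p φ : ℝ) : gY p (φ + Real.pi / 2) = gX p φ := by
  simp [gX, gY, g_N_rot, Real.sin_add_pi_div_two]
theorem g_V_neg (p φ : ℝ) : gV p (-φ) = gV p φ := by simp [gV, g_X_neg, g_Y_neg]
theorem g_V_rot (p φ : ℝ) : gV p (φ + Real.pi / 2) = gV p φ := by
  simp [gV, g_X_rot, g_Y_rot, add_comm]
theorem g_speed_neg {p : ℝ} (hp : 1 < p) (φ : ℝ) : speed p (-φ) = speed p φ := by
  simp [g_speed hp, g_X_neg, g_Y_neg, g_V_neg]
theorem g_speed_rot {p : ℝ} (hp : 1 < p) (φ : ℝ) : speed p (φ + Real.pi / 2) = speed p φ := by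
  simp [g_speed hp, g_X_rot, g_Y_rot, g_V_rot, add_comm]

/-- arc length -/
noncomputable def gS (p φ : ℝ) : ℝ := ∫ t in (0 : ℝ)..φ, speed p t
/-- quarter length -/
noncomputable def gq (p : ℝ) : ℝ := gS p (Real.pi / 2)

theorem g_S_sub {p : ℝ} (hp : 1 < p) (a b : ℝ) : ∫ t in a..b, speed p t = gS p b - gS p a := by
  have hi : ∀ a b, IntervalIntegrable (speed p) volume a b := fun a b =>
    (g_cont_speed hp).intervalIntegrable a b
  unfold gS
  rw [intervalIntegral.integral_interval_sub_left (hi _ _) (hi _ _)]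

theorem g_hasDerivAt_S {p : ℝ} (hp : 1 < p) (φ : ℝ) : HasDerivAt (gS p) (speed p φ) φ :=
  (g_cont_speed hp).integral_hasStrictDerivAt 0 φ |>.hasDerivAt

theorem g_S_strictMono {p : ℝ} (hp : 1 < p) : StrictMono (gS p) := by
  apply strictMono_of_deriv_pos
  intro x
  rw [(g_hasDerivAt_S hp x).deriv]
  exact g_speed_pos hp x

theorem g_S_zero (p : ℝ) : gS p 0 = 0 := by simp [gS]

theorem g_S_neg {p : ℝ} (hp : 1 < p) (φ : ℝ) : gS p (-φ) = - gS p φ := by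
  unfold gS
  have := intervalIntegral.integral_comp_neg (a := 0) (b := φ) (f := speed p)
  simp only [g_speed_neg hp, neg_zero] at this
  rw [this, intervalIntegral.integral_symm]

theorem g_S_rot {p : ℝ} (hp : 1 < p) (φ : ℝ) : gS p (φ + Real.pi / 2) = gS p φ + gq p := by
  have h : Function.Periodic (speed p) (Real.pi / 2) := g_speed_rot hp
  have := h.intervalIntegral_add_eq φ 0
  rw [zero_add, g_S_sub hp, g_S_sub hp, g_S_zero] at this
  unfold gq
  linarith

theorem g_q_pos {p : ℝ} (hp : 1 < p) : 0 < gq p := by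
  have := g_S_strictMono hp (show 0 < Real.pi / 2 by positivity)
  rw [g_S_zero] at this
  exact this

theorem g_S_surj {p : ℝ} (hp : 1 < p) : Function.Surjective (gS p) := by
  have h : Function.Periodic (speed p) (Real.pi / 2) := g_speed_rot hp
  have hc : Continuous (gS p) :=
    continuous_iff_continuousAt.2 fun φ => (g_hasDerivAt_S hp φ).continuousAt
  have hi : ∀ a b, IntervalIntegrable (speed p) volume a b := fun a b =>
    (g_cont_speed hp).intervalIntegrable a b
  exact hc.surjective
    (h.tendsto_atTop_intervalIntegral_of_pos' (hi _ _) (g_speed_pos hp) (by positivity))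
    (h.tendsto_atBot_intervalIntegral_of_pos' (hi _ _) (g_speed_pos hp) (by positivity))

theorem g_piP {p : ℝ} (hp : 1 < p) : piP p = 2 * gq p := by
  have h : {t : ℝ | t ∈ Set.Ico 0 (2 * Real.pi) ∧ rho p t ∈ Cp p} = Set.Ico 0 (2 * Real.pi) := by
    ext t
    simp only [Set.mem_ofPred_eq, and_iff_left_iff_imp]
    intro _
    have := g_unit hp t
    show (|gX p t| ^ p + |gY p t| ^ p) ^ (1 / p) = 1
    rw [this, Real.one_rpow]
  unfold piP muP
  rw [h, MeasureTheory.integral_Ico_eq_integral_Ioc,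
    ← intervalIntegral.integral_of_le (by positivity), g_S_sub hp, g_S_zero]
  have e1 := g_S_rot hp 0
  have e2 := g_S_rot hp (Real.pi / 2)
  have e3 := g_S_rot hp (Real.pi / 2 + Real.pi / 2)
  have e4 := g_S_rot hp (Real.pi / 2 + Real.pi / 2 + Real.pi / 2)
  rw [show Real.pi / 2 + Real.pi / 2 + Real.pi / 2 + Real.pi / 2 = 2 * Real.pi by ring] at e4
  rw [zero_add, g_S_zero] at e1
  linarith


/-- arc length parametrisation: inverse of `gS` -/
noncomputable def gT (p u : ℝ) : ℝ := Function.invFun (gS p) u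

theorem g_ST {p : ℝ} (hp : 1 < p) (u : ℝ) : gS p (gT p u) = u :=
  Function.rightInverse_invFun (g_S_surj hp) u
theorem g_TS {p : ℝ} (hp : 1 < p) (φ : ℝ) : gT p (gS p φ) = φ :=
  Function.leftInverse_invFun (g_S_strictMono hp).injective φ
theorem g_T_strictMono {p : ℝ} (hp : 1 < p) : StrictMono (gT p) := by
  intro a b hab
  rw [← (g_S_strictMono hp).lt_iff_lt, g_ST hp, g_ST hp]; exact hab
theorem g_T_surj {p : ℝ} (hp : 1 < p) : Function.Surjective (gT p) := fun φ => ⟨gS p φ, g_TS hp φ⟩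
theorem g_T_cont {p : ℝ} (hp : 1 < p) : Continuous (gT p) :=
  (g_T_strictMono hp).monotone.continuous_of_surjective (g_T_surj hp)
theorem g_T_neg {p : ℝ} (hp : 1 < p) (u : ℝ) : gT p (-u) = - gT p u := by
  apply (g_S_strictMono hp).injective
  rw [g_ST hp, g_S_neg hp, g_ST hp]
theorem g_T_rot {p : ℝ} (hp : 1 < p) (u : ℝ) : gT p (u + gq p) = gT p u + Real.pi / 2 := by
  apply (g_S_strictMono hp).injective
  rw [g_ST hp, g_S_rot hp, g_ST hp]
theorem g_hasDerivAt_T {p : ℝ} (hp : 1 < p) (u : ℝ) :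
    HasDerivAt (gT p) (speed p (gT p u))⁻¹ u :=
  HasDerivAt.of_local_left_inverse (g_T_cont hp).continuousAt (g_hasDerivAt_S hp _)
    (g_speed_pos hp _).ne' (Filter.Eventually.of_forall (g_ST hp))

/-- unit speed coordinates -/
noncomputable def gx (p u : ℝ) : ℝ := gX p (gT p u)
/-- unit speed coordinates -/
noncomputable def gy (p u : ℝ) : ℝ := gY p (gT p u)

theorem g_hasDerivAt_x {p : ℝ} (hp : 1 < p) (u : ℝ) :
    HasDerivAt (gx p) (- sg p (gy p u) / gV p (gT p u)) u := by
  have := (g_hasDerivAt_X hp (gT p u)).comp u (g_hasDerivAt_T hp u)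
  refine HasDerivAt.congr_deriv (f := gx p) this ?_
  rw [g_speed hp]
  have h1 := (g_R_pos p (gT p u)).ne'
  have h2 := (g_V_pos p (gT p u)).ne'
  unfold gy
  field_simp

theorem g_hasDerivAt_y {p : ℝ} (hp : 1 < p) (u : ℝ) :
    HasDerivAt (gy p) (sg p (gx p u) / gV p (gT p u)) u := by
  have := (g_hasDerivAt_Y hp (gT p u)).comp u (g_hasDerivAt_T hp u)
  refine HasDerivAt.congr_deriv (f := gy p) this ?_
  rw [g_speed hp]
  have h1 := (g_R_pos p (gT p u)).ne'
  have h2 := (g_V_pos p (gT p u)).ne'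
  unfold gx
  field_simp

theorem g_x_neg {p : ℝ} (hp : 1 < p) (u : ℝ) : gx p (-u) = gx p u := by
  unfold gx; rw [g_T_neg hp, g_X_neg]
theorem g_y_neg {p : ℝ} (hp : 1 < p) (u : ℝ) : gy p (-u) = -gy p u := by
  unfold gy; rw [g_T_neg hp, g_Y_neg]
theorem g_x_rot {p : ℝ} (hp : 1 < p) (u : ℝ) : gx p (u + gq p) = -gy p u := by
  unfold gx gy; rw [g_T_rot hp, g_X_rot]
theorem g_y_rot {p : ℝ} (hp : 1 < p) (u : ℝ) : gy p (u + gq p) = gx p u := by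
  unfold gx gy; rw [g_T_rot hp, g_Y_rot]

/-- p-th power of chord length -/
noncomputable def gQ (p h μ : ℝ) : ℝ :=
  |gx p (μ + h) - gx p (μ - h)| ^ p + |gy p (μ + h) - gy p (μ - h)| ^ p

theorem g_Q_neg {p : ℝ} (hp : 1 < p) (h μ : ℝ) : gQ p h (-μ) = gQ p h μ := by
  unfold gQ
  rw [show -μ + h = -(μ - h) by ring, show -μ - h = -(μ + h) by ring, g_x_neg hp, g_x_neg hp,
    g_y_neg hp, g_y_neg hp, abs_sub_comm,
    show -gy p (μ - h) - -gy p (μ + h) = gy p (μ + h) - gy p (μ - h) by ring]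

theorem g_Q_rot {p : ℝ} (hp : 1 < p) (h : ℝ) : Function.Periodic (gQ p h) (gq p) := by
  intro μ
  unfold gQ
  rw [show μ + gq p + h = (μ + h) + gq p by ring, show μ + gq p - h = (μ - h) + gq p by ring,
    g_x_rot hp, g_x_rot hp, g_y_rot hp, g_y_rot hp,
    show -gy p (μ + h) - -gy p (μ - h) = -(gy p (μ + h) - gy p (μ - h)) by ring, abs_neg, add_comm]

theorem g_hasDerivAt_Q {p : ℝ} (hp : 1 < p) (h μ : ℝ) :
    HasDerivAt (gQ p h)
      (p * (sg p (gx p (μ + h) - gx p (μ - h)) *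
          (- sg p (gy p (μ + h)) / gV p (gT p (μ + h)) + sg p (gy p (μ - h)) / gV p (gT p (μ - h)))
        + sg p (gy p (μ + h) - gy p (μ - h)) *
          (sg p (gx p (μ + h)) / gV p (gT p (μ + h))
            - sg p (gx p (μ - h)) / gV p (gT p (μ - h))))) μ := by
  have hx := ((g_hasDerivAt_x hp (μ + h)).comp_add_const μ h).sub
    ((g_hasDerivAt_x hp (μ - h)).comp_sub_const μ h)
  have hy := ((g_hasDerivAt_y hp (μ + h)).comp_add_const μ h).sub
    ((g_hasDerivAt_y hp (μ - h)).comp_sub_const μ h)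
  have h1 := (hasDerivAt_abs_rpow (gx p (μ + h) - gx p (μ - h)) hp).comp μ hx
  have h2 := (hasDerivAt_abs_rpow (gy p (μ + h) - gy p (μ - h)) hp).comp μ hy
  refine HasDerivAt.congr_deriv (f := gQ p h) (h1.add h2) ?_
  unfold sg
  ring

theorem g_X_anti {p : ℝ} (hp : 1 < p) : StrictAntiOn (gX p) (Set.Icc 0 Real.pi) := by
  apply strictAntiOn_of_deriv_neg (convex_Icc _ _) (g_contX hp).continuousOn
  intro φ hφ
  rw [interior_Icc] at hφ
  rw [(g_hasDerivAt_X hp φ).deriv]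
  have hY : 0 < gY p φ := div_pos (Real.sin_pos_of_pos_of_lt_pi hφ.1 hφ.2) (g_N_pos p φ)
  have := mul_pos (sg_pos_iff (p := p) hY) (g_R_pos p φ)
  linarith

theorem g_X_abs (p φ : ℝ) : gX p |φ| = gX p φ := by
  rcases abs_choice φ with h | h <;> simp [h, g_X_neg]

/-- `Y - X` is increasing in the distance to `-π/4`. -/
theorem g_D_mono {p : ℝ} (hp : 1 < p) :
    StrictMonoOn (fun φ => gY p φ - gX p φ) (Set.Icc (-(Real.pi / 4)) (3 * Real.pi / 4)) := by
  have hd : ∀ φ, HasDerivAt (fun φ => gY p φ - gX p φ)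
      ((sg p (gX p φ) + sg p (gY p φ)) * (gX p φ ^ 2 + gY p φ ^ 2)) φ := fun φ =>
    ((g_hasDerivAt_Y hp φ).sub (g_hasDerivAt_X hp φ)).congr_deriv (by ring)
  apply strictMonoOn_of_deriv_pos (convex_Icc _ _)
    (fun φ _ => (hd φ).continuousAt.continuousWithinAt)
  intro φ hφ
  rw [interior_Icc] at hφ
  rw [(hd φ).deriv]
  refine mul_pos (sg_add_pos hp ?_) (g_R_pos p φ)
  unfold gX gY
  rw [← add_div]
  refine div_pos ?_ (g_N_pos p φ)
  have h1 : 0 < Real.sin (φ + Real.pi / 4) :=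
    Real.sin_pos_of_pos_of_lt_pi (by linarith [hφ.1]) (by linarith [hφ.2])
  rw [Real.sin_add, Real.cos_pi_div_four, Real.sin_pi_div_four] at h1
  have h2 : 0 < √2 / 2 := by positivity
  nlinarith

theorem g_D_symm (p φ : ℝ) :
    gY p (-(Real.pi / 2) - φ) - gX p (-(Real.pi / 2) - φ) = gY p φ - gX p φ := by
  have : -(Real.pi / 2) - φ = -(φ + Real.pi / 2) := by ring
  rw [this, g_Y_neg, g_X_neg, g_Y_rot, g_X_rot]; ring

theorem g_mono_except {f f' : ℝ → ℝ} (hd : ∀ x, HasDerivAt f (f' x) x) (F : Finset ℝ) :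
    ∀ a b, a ≤ b → (∀ x ∈ Set.Ioo a b, x ∉ F → 0 ≤ f' x) → f a ≤ f b := by
  induction F using Finset.induction_on with
  | empty =>
    intro a b hab h
    have : MonotoneOn f (Set.Icc a b) := by
      apply monotoneOn_of_deriv_nonneg (convex_Icc a b)
      · exact fun x _ => (hd x).continuousAt.continuousWithinAt
      · exact fun x _ => (hd x).differentiableAt.differentiableWithinAt
      · intro x hx
        rw [interior_Icc] at hx
        rw [(hd x).deriv]
        exact h x hx (by simp)
    exact this ⟨le_rfl, hab⟩ ⟨hab, le_rfl⟩ hab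
  | insert c F hc ih =>
    intro a b hab h
    by_cases hcm : c ∈ Set.Ioo a b
    · refine (ih a c hcm.1.le ?_).trans (ih c b hcm.2.le ?_)
      · intro x hx hxF
        refine h x ⟨hx.1, hx.2.trans hcm.2⟩ ?_
        rw [Finset.mem_insert, not_or]
        exact ⟨hx.2.ne, hxF⟩
      · intro x hx hxF
        refine h x ⟨hcm.1.trans hx.1, hx.2⟩ ?_
        rw [Finset.mem_insert, not_or]
        exact ⟨hx.1.ne', hxF⟩
    · apply ih a b hab
      intro x hx hxF
      refine h x hx ?_
      rw [Finset.mem_insert, not_or]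
      refine ⟨?_, hxF⟩
      rintro rfl
      exact hcm hx

/-- Sign of the derivative of `gQ`. -/
theorem g_Q_sign {p h μ : ℝ} (hp : 1 < p) (h0 : 0 < h) (hq : h < gq p) (hμ1 : -(gq p / 2) < μ)
    (hμ2 : μ < 0) (hne1 : μ ≠ -h) (hne2 : μ ≠ h - gq p) :
    let Q' := (p * (sg p (gx p (μ + h) - gx p (μ - h)) *
          (- sg p (gy p (μ + h)) / gV p (gT p (μ + h)) + sg p (gy p (μ - h)) / gV p (gT p (μ - h)))
        + sg p (gy p (μ + h) - gy p (μ - h)) *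
          (sg p (gx p (μ + h)) / gV p (gT p (μ + h))
            - sg p (gx p (μ - h)) / gV p (gT p (μ - h)))))
    (2 ≤ p → 0 ≤ Q') ∧ (p ≤ 2 → Q' ≤ 0) := by
  intro Q'
  have hp0 : 0 < p := by linarith
  have hpi := Real.pi_pos
  have hTm := g_T_strictMono hp
  set α := gT p (μ + h) with hα
  set β := gT p (μ - h) with hβ
  have k1 : α + β < 0 := by
    have := hTm (show μ + h < -(μ - h) by linarith)
    rw [g_T_neg hp] at this
    linarith
  have k2 : -(Real.pi / 2) < α + β := by
    have := hTm (show -(μ - h) < μ + h + gq p by linarith)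
    rw [g_T_neg hp, g_T_rot hp] at this
    linarith
  have k3 : 0 < α - β := by
    have := hTm (show μ - h < μ + h by linarith)
    linarith
  have k4 : α - β < Real.pi := by
    have := hTm (show μ + h < μ - h + gq p + gq p by linarith)
    rw [g_T_rot hp, g_T_rot hp] at this
    linarith
  have hα0 : α ≠ 0 := by
    intro hc
    have : gS p α = gS p 0 := by rw [hc]
    rw [hα, g_ST hp, g_S_zero] at this
    exact hne1 (by linarith)
  have hβ0 : β ≠ -(Real.pi / 2) := by
    intro hc
    have : gS p β = gS p (-(Real.pi / 2)) := by rw [hc]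
    rw [hβ, g_ST hp, g_S_neg hp] at this
    unfold gq at hne2
    exact hne2 (by linarith)
  have ha : 0 < gX p α - gX p β := by
    rw [sub_pos, ← g_X_abs p α, ← g_X_abs p β]
    have hb : |β| = -β := abs_of_neg (by linarith)
    have hab : |α| < |β| := by rw [hb, abs_lt]; constructor <;> linarith
    exact g_X_anti hp ⟨abs_nonneg _, by rw [hb] at hab; linarith⟩
      ⟨abs_nonneg _, by rw [hb]; linarith⟩ hab
  have hab : gX p α - gX p β < gY p α - gY p β := by
    suffices hs : gY p β - gX p β < gY p α - gX p α by linarith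
    rcases le_or_gt (-(Real.pi / 4)) β with hb | hb
    · exact g_D_mono hp ⟨hb, by linarith⟩ ⟨by linarith, by linarith⟩ (by linarith)
    · rw [← g_D_symm p β]
      exact g_D_mono hp ⟨by linarith, by linarith⟩ ⟨by linarith, by linarith⟩ (by linarith)
  have hNα := g_N_pos p α
  have hNβ := g_N_pos p β
  have hx1 : 0 < gX p α :=
    div_pos (Real.cos_pos_of_mem_Ioo ⟨by linarith, by linarith⟩) hNα
  have hy2 : gY p β < 0 :=
    div_neg_of_neg_of_pos (Real.sin_neg_of_neg_of_neg_pi_lt (by linarith) (by linarith)) hNβ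
  have hy1 : gY p α ≠ 0 := by
    refine div_ne_zero ?_ hNα.ne'
    intro hc
    exact hα0 ((Real.sin_eq_zero_iff_of_lt_of_lt (by linarith) (by linarith)).1 hc)
  have hx2 : gX p β ≠ 0 := by
    refine div_ne_zero ?_ hNβ.ne'
    intro hc
    have e : Real.sin (β + Real.pi / 2) = 0 := by rw [Real.sin_add_pi_div_two, hc]
    have := (Real.sin_eq_zero_iff_of_lt_of_lt (by linarith) (by linarith)).1 e
    exact hβ0 (by linarith)
  have hdet : 0 < gX p β * gY p α - gY p β * gX p α := by
    have e : gX p β * gY p α - gY p β * gX p α = Real.sin (α - β) / (Np p α * Np p β) := by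
      rw [Real.sin_sub]; unfold gX gY; field_simp
    rw [e]
    exact div_pos (Real.sin_pos_of_pos_of_lt_pi k3 k4) (mul_pos hNα hNβ)
  have key := q_key hp (g_unit hp α) (g_unit hp β) hx1 hy2 hy1 hx2 ha hab hdet
  have hb : 0 < gY p α - gY p β := by linarith
  have hQ : Q' = p * ((sg p (gX p α) * (gY p α - gY p β) ^ (p - 1)
        - sg p (gY p α) * (gX p α - gX p β) ^ (p - 1)) / gV p α
      - (sg p (gX p β) * (gY p α - gY p β) ^ (p - 1)
        - sg p (gY p β) * (gX p α - gX p β) ^ (p - 1)) / gV p β) := by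
    rw [← sg_pos ha, ← sg_pos hb]
    show p * (sg p (gX p α - gX p β) * (- sg p (gY p α) / gV p α + sg p (gY p β) / gV p β)
        + sg p (gY p α - gY p β) * (sg p (gX p α) / gV p α - sg p (gX p β) / gV p β)) = _
    ring
  rw [hQ]
  constructor
  · intro h2
    exact mul_nonneg hp0.le (sub_nonneg.2 (key.1 h2))
  · intro h2
    exact mul_nonpos_of_nonneg_of_nonpos hp0.le (sub_nonpos.2 (key.2 h2))

theorem g_Q_reduce {p : ℝ} (hp : 1 < p) (h μ : ℝ) :
    ∃ ν, -(gq p / 2) ≤ ν ∧ ν ≤ 0 ∧ gQ p h μ = gQ p h ν := by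
  obtain ⟨y, hy, e⟩ := (g_Q_rot hp h).exists_mem_Ico (g_q_pos hp) μ (-(gq p / 2))
  rcases le_or_gt y 0 with h0 | h0
  · exact ⟨y, hy.1, h0, e⟩
  · refine ⟨-y, by linarith [hy.2], by linarith, ?_⟩
    rw [g_Q_neg hp]; exact e

theorem g_Q_min_ge {p h : ℝ} (hp : 2 ≤ p) (h0 : 0 < h) (hq : h < gq p) (μ : ℝ) :
    gQ p h (-(gq p / 2)) ≤ gQ p h μ := by
  have hp1 : 1 < p := by linarith
  obtain ⟨ν, h1, h2, e⟩ := g_Q_reduce hp1 h μ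
  rw [e]
  refine g_mono_except (g_hasDerivAt_Q hp1 h) {-h, h - gq p} _ _ h1 ?_
  intro x hx hxF
  simp only [Finset.mem_insert, Finset.mem_singleton, not_or] at hxF
  exact (g_Q_sign hp1 h0 hq hx.1 (hx.2.trans_le h2) hxF.1 hxF.2).1 hp

theorem g_Q_min_le {p h : ℝ} (hp1 : 1 < p) (hp : p ≤ 2) (h0 : 0 < h) (hq : h < gq p) (μ : ℝ) :
    gQ p h 0 ≤ gQ p h μ := by
  obtain ⟨ν, h1, h2, e⟩ := g_Q_reduce hp1 h μ
  rw [e]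
  have := g_mono_except (fun x => (g_hasDerivAt_Q hp1 h x).neg) {-h, h - gq p} ν 0 h2 ?_
  · simpa using this
  intro x hx hxF
  simp only [Finset.mem_insert, Finset.mem_singleton, not_or] at hxF
  exact neg_nonneg.2
    ((g_Q_sign hp1 h0 hq (h1.trans_lt hx.1) hx.2 hxF.1 hxF.2).2 hp)

theorem g_rho_period {p : ℝ} (φ : ℝ) : rho p (φ + 2 * Real.pi) = rho p φ := by
  unfold rho Np
  rw [Real.cos_add_two_pi, Real.sin_add_two_pi]

theorem g_T_period {p : ℝ} (hp : 1 < p) (u : ℝ) :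
    gT p (u + 4 * gq p) = gT p u + 2 * Real.pi := by
  rw [show u + 4 * gq p = u + gq p + gq p + gq p + gq p by ring, g_T_rot hp, g_T_rot hp,
    g_T_rot hp, g_T_rot hp]
  ring

theorem g_chord {p : ℝ} (h μ : ℝ) :
    lpN p (rho p (gT p (μ + h)) - rho p (gT p (μ - h))) = gQ p h μ ^ (1 / p) := rfl

theorem g_chordMin {p h m : ℝ} (hp : 1 < p) (h0 : 0 < h) (hq : h < gq p)
    (hm : ∀ μ, gQ p h m ≤ gQ p h μ) : chordMin p (4 * gq p - 2 * h) = gQ p h m ^ (1 / p) := by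
  have hp0 : 0 < p := by linarith
  have hQ0 : 0 ≤ gQ p h m := by unfold gQ; positivity
  apply IsLeast.csInf_eq
  constructor
  · refine ⟨gT p (m + h), gT p (m - h) + 2 * Real.pi, ?_, ?_, ?_, ?_⟩
    · rw [← g_T_period hp]
      exact (g_T_strictMono hp).monotone (by linarith)
    · have := (g_T_strictMono hp).monotone (show m - h ≤ m + h by linarith)
      linarith
    · rw [g_S_sub hp, ← g_T_period hp, g_ST hp, g_ST hp]; ring
    · rw [g_rho_period, g_chord]
  · rintro d ⟨a, b, -, -, hlen, rfl⟩
    rw [g_S_sub hp] at hlen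
    have ea : a = gT p ((gS p a - h) + h) := by rw [sub_add_cancel, g_TS hp]
    have eb : b = gT p ((gS p a - h) - h) + 2 * Real.pi := by
      rw [← g_T_period hp, show gS p a - h - h + 4 * gq p = gS p b by linarith, g_TS hp]
    have e : rho p b = rho p (gT p ((gS p a - h) - h)) := by
      conv_lhs => rw [eb]
      rw [g_rho_period]
    rw [e]
    have e' : rho p a = rho p (gT p ((gS p a - h) + h)) := by rw [← ea]
    rw [e', g_chord]
    exact Real.rpow_le_rpow hQ0 (hm _) (by positivity)

/-- substitution -/
theorem g_subst {p a b : ℝ} (hp : 1 < p) (ha : 0 < a) (hab : a ≤ b) (hb : b ≤ Real.pi / 2) :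
    ∫ t in a..b, speed p t = ∫ z in (gX p b)..(gX p a),
      (z ^ (p ^ 2 - p) * (1 - z ^ p) ^ (1 - p) + 1) ^ (1 / p) := by
  have hpi := Real.pi_pos
  have hp0 : 0 < p := by linarith
  have hXY : ∀ φ ∈ Set.Icc a b, 0 ≤ gX p φ ∧ 0 < gY p φ := by
    intro φ hφ
    exact ⟨div_nonneg (Real.cos_nonneg_of_mem_Icc ⟨by linarith [hφ.1], by linarith [hφ.2]⟩)
      (g_N_pos p φ).le, div_pos (Real.sin_pos_of_pos_of_lt_pi (by linarith [hφ.1])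
        (by linarith [hφ.2])) (g_N_pos p φ)⟩
  have hYp : ∀ φ ∈ Set.Icc a b, 1 - gX p φ ^ p = gY p φ ^ p := by
    intro φ hφ
    have := g_unit hp φ
    rw [abs_of_nonneg (hXY φ hφ).1, abs_of_pos (hXY φ hφ).2] at this
    linarith
  have hcsg : ContinuousOn (fun φ => - sg p (gY p φ) * (gX p φ ^ 2 + gY p φ ^ 2))
      (Set.uIcc a b) := by
    rw [Set.uIcc_of_le hab]
    have h1 : ContinuousOn (fun φ => - (gY p φ) ^ (p - 1) * (gX p φ ^ 2 + gY p φ ^ 2))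
        (Set.Icc a b) := by
      refine ContinuousOn.mul ?_ ?_
      · refine (ContinuousOn.rpow_const (g_contY hp).continuousOn ?_).neg
        exact fun x _ => Or.inr (by linarith)
      · exact (((g_contX hp).pow 2).add ((g_contY hp).pow 2)).continuousOn
    refine h1.congr ?_
    intro φ hφ
    simp only
    rw [sg_pos (hXY φ hφ).2]
  have := intervalIntegral.integral_comp_mul_deriv' (a := a) (b := b) (f := gX p)
    (g := fun z : ℝ => (z ^ (p ^ 2 - p) * (1 - z ^ p) ^ (1 - p) + 1) ^ (1 / p))
    (fun φ _ => g_hasDerivAt_X hp φ) hcsg ?_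
  · rw [intervalIntegral.integral_symm (gX p a) (gX p b), ← this, ← intervalIntegral.integral_neg]
    apply intervalIntegral.integral_congr
    intro φ hφ
    rw [Set.uIcc_of_le hab] at hφ
    obtain ⟨hX, hY⟩ := hXY φ hφ
    simp only [Function.comp]
    rw [g_speed hp, hYp φ hφ, sg_pos hY, ← Real.rpow_mul hY.le]
    have e1 : gV p φ = (gX p φ ^ (p ^ 2 - p) * gY p φ ^ (p * (1 - p)) + 1) ^ (1 / p)
        * gY p φ ^ (p - 1) := by
      have e2 : gY p φ ^ (p - 1) = (gY p φ ^ (p * (p - 1))) ^ (1 / p) := by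
        rw [← Real.rpow_mul hY.le]; congr 1; field_simp
      rw [e2, ← Real.mul_rpow (by positivity) (by positivity), add_mul, mul_assoc,
        ← Real.rpow_add hY, show p * (1 - p) + p * (p - 1) = 0 by ring, Real.rpow_zero]
      unfold gV
      rw [abs_of_nonneg hX, abs_of_pos hY, show p ^ 2 - p = p * (p - 1) by ring, mul_one, one_mul]
    rw [e1]; ring
  · rw [Set.uIcc_of_le hab]
    rintro z ⟨φ, hφ, rfl⟩
    obtain ⟨hX, hY⟩ := hXY φ hφ
    have hY' := hYp φ hφ
    have hYpos : 0 < gY p φ ^ p := Real.rpow_pos_of_pos hY _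
    apply ContinuousAt.continuousWithinAt
    refine ContinuousAt.rpow_const ?_ (Or.inr (by positivity))
    refine ContinuousAt.add (ContinuousAt.mul ?_ ?_) continuousAt_const
    · exact continuousAt_id.rpow_const (Or.inr (by nlinarith))
    · refine ContinuousAt.rpow_const ?_ (Or.inl (by rw [hY']; exact hYpos.ne'))
      exact continuousAt_const.sub (continuousAt_id.rpow_const (Or.inr hp0.le))

theorem g_X_zero {p : ℝ} (hp : 1 < p) : gX p 0 = 1 := by
  simp [gX, Np, Real.zero_rpow (show p ≠ 0 by linarith)]
theorem g_X_half (p : ℝ) : gX p (Real.pi / 2) = 0 := by simp [gX]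
theorem g_X_quarter {p : ℝ} (hp : 1 < p) : gX p (Real.pi / 4) = 2 ^ (-(1 / p)) := by
  have hp0 : 0 < p := by linarith
  have h2 : (0 : ℝ) < √2 / 2 := by positivity
  unfold gX Np
  rw [Real.sin_pi_div_four, Real.cos_pi_div_four, abs_of_pos h2, ← two_mul,
    Real.mul_rpow (by norm_num) (by positivity), ← Real.rpow_mul h2.le, mul_one_div_cancel hp0.ne',
    Real.rpow_one, Real.rpow_neg (by norm_num)]
  field_simp

theorem g_Y_of_X {p φ : ℝ} (hp : 1 < p) (hX : 0 ≤ gX p φ) (hY : 0 ≤ gY p φ) :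
    gY p φ = (1 - gX p φ ^ p) ^ (1 / p) := by
  have hp0 : 0 < p := by linarith
  have := g_unit hp φ
  rw [abs_of_nonneg hX, abs_of_nonneg hY] at this
  rw [show 1 - gX p φ ^ p = gY p φ ^ p by linarith, ← Real.rpow_mul hY, mul_one_div_cancel hp0.ne',
    Real.rpow_one]

theorem g_Y_nonneg {p φ : ℝ} (h0 : 0 ≤ φ) (h1 : φ ≤ Real.pi) : 0 ≤ gY p φ :=
  div_nonneg (Real.sin_nonneg_of_nonneg_of_le_pi h0 h1) (g_N_pos p φ).le

theorem g_exists {p b s : ℝ} (hp : 1 < p) (hb0 : 0 < b) (h1 : gX p b < s)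
    (h2 : s < 1) : ∃ φ, 0 < φ ∧ φ < b ∧ gX p φ = s := by
  have := intermediate_value_Ioo' hb0.le (g_contX hp).continuousOn
  rw [g_X_zero hp] at this
  obtain ⟨φ, hφ, e⟩ := this ⟨h1, h2⟩
  exact ⟨φ, hφ.1, hφ.2, e⟩

theorem g_final_le {p s : ℝ} (hp : 1 < p) (hp2 : p ≤ 2) (hs0 : 0 < s) (hs1 : s < 1) :
    chordMin p (piP p + 2 * ∫ z in (0 : ℝ)..s,
      (z ^ (p ^ 2 - p) * (1 - z ^ p) ^ (1 - p) + 1) ^ (1 / p)) = 2 * (1 - s ^ p) ^ (1 / p) := by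
  have hp0 : 0 < p := by linarith
  have hpi := Real.pi_pos
  obtain ⟨φ, h0, h1, rfl⟩ := g_exists hp (show 0 < Real.pi / 2 by positivity)
    (by rw [g_X_half]; exact hs0) hs1
  have hY := g_Y_nonneg (p := p) h0.le (by linarith)
  rw [← g_Y_of_X hp hs0.le hY]
  have hsub := g_subst hp h0 h1.le le_rfl
  rw [g_X_half, g_S_sub hp] at hsub
  rw [← hsub, g_piP hp]
  have hh0 : 0 < gS p φ := by
    have := g_S_strictMono hp h0; rwa [g_S_zero] at this
  have hhq : gS p φ < gq p := g_S_strictMono hp h1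
  rw [show 2 * gq p + 2 * (gS p (Real.pi / 2) - gS p φ) = 4 * gq p - 2 * gS p φ by unfold gq; ring]
  rw [g_chordMin hp hh0 hhq (g_Q_min_le hp hp2 hh0 hhq)]
  unfold gQ
  rw [zero_add, zero_sub, g_x_neg hp, g_y_neg hp, sub_self, abs_zero, Real.zero_rpow hp0.ne',
    zero_add, ← Real.rpow_mul (abs_nonneg _), mul_one_div_cancel hp0.ne', Real.rpow_one]
  unfold gy
  rw [g_TS hp, abs_of_nonneg (by linarith)]
  ring

theorem g_final_ge {p s : ℝ} (hp2 : 2 < p) (hs0 : 2 ^ (-(1 / p)) < s) (hs1 : s < 1) :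
    chordMin p (piP p + 2 * ∫ z in ((2 : ℝ) ^ (-(1 / p)))..s,
      (z ^ (p ^ 2 - p) * (1 - z ^ p) ^ (1 - p) + 1) ^ (1 / p))
      = (2 : ℝ) ^ (1 / p) * ((1 - s ^ p) ^ (1 / p) + s) := by
  have hp : 1 < p := by linarith
  have hp0 : 0 < p := by linarith
  have hpi := Real.pi_pos
  have hs00 : 0 < s := lt_trans (by positivity) hs0
  obtain ⟨φ, h0, h1, rfl⟩ := g_exists hp (show 0 < Real.pi / 4 by positivity)
    (by rw [g_X_quarter hp]; exact hs0) hs1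
  have hY := g_Y_nonneg (p := p) h0.le (by linarith)
  rw [← g_Y_of_X hp hs00.le hY]
  have hsub := g_subst hp h0 h1.le (by linarith)
  rw [g_X_quarter hp, g_S_sub hp] at hsub
  rw [← hsub, g_piP hp]
  have hqq : gS p (Real.pi / 4) = gq p / 2 := by
    have := g_S_rot hp (-(Real.pi / 4))
    rw [show -(Real.pi / 4) + Real.pi / 2 = Real.pi / 4 by ring, g_S_neg hp] at this
    linarith
  have hq := g_q_pos hp
  have hh0 : 0 < gS p φ := by
    have := g_S_strictMono hp h0; rwa [g_S_zero] at this
  have hhq : gS p φ < gq p / 2 := by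
    rw [← hqq]; exact g_S_strictMono hp h1
  rw [show 2 * gq p + 2 * (gS p (Real.pi / 4) - gS p φ)
    = 4 * gq p - 2 * (gq p / 2 + gS p φ) by rw [hqq]; ring]
  rw [g_chordMin hp (by linarith) (by linarith)
    (g_Q_min_ge hp2.le (show 0 < gq p / 2 + gS p φ by linarith) (by linarith))]
  unfold gQ
  rw [show -(gq p / 2) + (gq p / 2 + gS p φ) = gS p φ by ring,
    show -(gq p / 2) - (gq p / 2 + gS p φ) = -(gS p φ + gq p) by ring, g_x_neg hp, g_y_neg hp,
    g_x_rot hp, g_y_rot hp]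
  unfold gx gy
  rw [g_TS hp, sub_neg_eq_add, sub_neg_eq_add, add_comm (gY p φ), ← two_mul,
    abs_of_nonneg (by linarith), Real.mul_rpow (by norm_num) (by positivity),
    ← Real.rpow_mul (by linarith), mul_one_div_cancel hp0.ne', Real.rpow_one]

/-- For every `p > 1`, `L_p(e_p) = γ_p`: the minimum ℓ_p chord length over all pairs
of points of `C_p` whose joining arc has ℓ_p length `e_p` equals `γ_p`, where
`e_p, γ_p` are defined piecewise for `p ∈ (1,2]` and `p ∈ (2,∞)` (the latter via the
unique root `w_p ∈ (0,1)` of `w^p + 1 = 2(1−w)^p`). -/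
theorem stmt_16 (p : ℝ) (hp : 1 < p) :
    (p ≤ 2 →
      let sp : ℝ := (((2 : ℝ) ^ p - 1) ^ (1 / (p - 1)) + 1) ^ (-(1 / p))
      let ep : ℝ := piP p
        + 2 * ∫ z in (0 : ℝ)..sp, (z ^ (p ^ 2 - p) * (1 - z ^ p) ^ (1 - p) + 1) ^ (1 / p)
      chordMin p ep = 2 * (1 - sp ^ p) ^ (1 / p)) ∧
    (2 < p → ∀ w ∈ Set.Ioo (0 : ℝ) 1, w ^ p + 1 = 2 * (1 - w) ^ p →
      let sp : ℝ := (w ^ (p / (p - 1)) + 1) ^ (-(1 / p))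
      let ep : ℝ := piP p
        + 2 * ∫ z in ((2 : ℝ) ^ (-(1 / p)))..sp,
            (z ^ (p ^ 2 - p) * (1 - z ^ p) ^ (1 - p) + 1) ^ (1 / p)
      chordMin p ep = (2 : ℝ) ^ (1 / p) * ((1 - sp ^ p) ^ (1 / p) + sp)) := by
  have hp0 : 0 < p := by linarith
  have hr : 0 < p - 1 := by linarith
  have hneg : -(1 / p) < 0 := by
    have : 0 < 1 / p := by positivity
    linarith
  constructor
  · intro hp2
    have hb : 0 < ((2 : ℝ) ^ p - 1) ^ (1 / (p - 1)) := by
      apply Real.rpow_pos_of_pos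
      have := Real.one_lt_rpow (show (1 : ℝ) < 2 by norm_num) hp0
      linarith
    exact g_final_le hp hp2 (Real.rpow_pos_of_pos (by linarith) _)
      (Real.rpow_lt_one_of_one_lt_of_neg (by linarith) hneg)
  · intro hp2 w hw _
    have hb : 0 < w ^ (p / (p - 1)) := Real.rpow_pos_of_pos hw.1 _
    have hb1 : w ^ (p / (p - 1)) < 1 := Real.rpow_lt_one hw.1.le hw.2 (by positivity)
    exact g_final_ge hp2 (Real.rpow_lt_rpow_of_neg (by linarith) (by linarith) hneg)
      (Real.rpow_lt_one_of_one_lt_of_neg (by linarith) hneg)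
end
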